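/- arXiv:1508.04644 — 4 statements merged into one kernel-verified Lean document; each statement's English description precedes it below -/
import Mathlib

section
/- For a finite undirected graph G with capacity function c taking values in powers of a fixed integer d > 0 on every edge, the quantum max-flow equals the quantum min-cut: QMF(G,c) = QMC(G,c). -/
open scoped Classical

/-- A tensor-network template: a finite undirected graph with edge set `E`, internal
vertices `V`, input open ends `S`, output open ends `T`, and a capacity on each edge.
Each edge has two ends (`ends e 0` and `ends e 1`), each attached either to an internal
vertex or to an open end; each open end is the end of exactly one edge. -/
structure TN where
  V : Type
  E : Type
  S : Type
  T : Type
  fV : Fintype V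
  dV : DecidableEq V
  fE : Fintype E
  dE : DecidableEq E
  fS : Fintype S
  dS : DecidableEq S
  fT : Fintype T
  dT : DecidableEq T
  /-- The capacity (local Hilbert space dimension) of each edge. -/
  c : E → ℕ
  c_pos : ∀ e, 0 < c e
  /-- The two ends of each edge attach to internal vertices or open ends. -/
  ends : E → Fin 2 → V ⊕ S ⊕ T
  /-- Each input open end is the end of exactly one edge. -/
  openS : ∀ u : S, ∃! p : E × Fin 2, ends p.1 p.2 = Sum.inr (Sum.inl u)
  /-- Each output open end is the end of exactly one edge. -/
  openT : ∀ u : T, ∃! p : E × Fin 2, ends p.1 p.2 = Sum.inr (Sum.inr u)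

attribute [instance] TN.fV TN.dV TN.fE TN.dE TN.fS TN.dS TN.fT TN.dT

namespace TN

variable (N : TN)

/-- The edge-ends incident to an internal vertex `v`. -/
def Legs (v : N.V) : Type := {p : N.E × Fin 2 // N.ends p.1 p.2 = Sum.inl v}

noncomputable instance (v : N.V) : Fintype (N.Legs v) := by unfold Legs; infer_instance

/-- A tensor assignment: a tensor at each internal vertex, i.e. a complex number for each
choice of an index on each incident edge-end. -/
def Assignment : Type :=
  (v : N.V) → (((p : N.Legs v) → Fin (N.c p.1.1)) → ℂ)

noncomputable instance : TopologicalSpace N.Assignment := by unfold Assignment; infer_instance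

/-- The edge whose open end is the input `u`. -/
noncomputable def inEdge (u : N.S) : N.E := (N.openS u).choose.1

/-- The edge whose open end is the output `u`. -/
noncomputable def outEdge (u : N.T) : N.E := (N.openT u).choose.1

/-- Multi-indices on the input edges; a basis of the input space `V_S`. -/
def InIdx : Type := (u : N.S) → Fin (N.c (N.inEdge u))

/-- Multi-indices on the output edges; a basis of the output space `V_T`. -/
def OutIdx : Type := (u : N.T) → Fin (N.c (N.outEdge u))

noncomputable instance : Fintype N.InIdx := by unfold InIdx; infer_instance
noncomputable instance : Fintype N.OutIdx := by unfold OutIdx; infer_instance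
noncomputable instance : DecidableEq N.InIdx := by unfold InIdx; infer_instance
noncomputable instance : DecidableEq N.OutIdx := by unfold OutIdx; infer_instance

/-- The matrix of the linear map `β(G,c;𝒯) : V_S → V_T` obtained by contracting all
internal edges of the tensor network. -/
noncomputable def β (𝒯 : N.Assignment) : Matrix N.OutIdx N.InIdx ℂ :=
  fun iT iS => ∑ W : (e : N.E) → Fin (N.c e),
    if (∀ u : N.S, W (N.inEdge u) = iS u) ∧ (∀ u : N.T, W (N.outEdge u) = iT u) then
      ∏ v : N.V, 𝒯 v (fun p => W p.1.1)
    else 0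

/-- The quantum max-flow: the maximal rank of the contracted linear map over all
tensor assignments. -/
noncomputable def QMF : ℕ := sSup {r : ℕ | ∃ 𝒯 : N.Assignment, (N.β 𝒯).rank = r}

/-- `C` is an edge cut set: for some partition of vertices and open ends into an `S`-side
and a `T`-side, `C` is exactly the set of edges crossing the partition. -/
def IsCutSet (C : Finset N.E) : Prop :=
  ∃ f : N.V ⊕ N.S ⊕ N.T → Bool,
    (∀ u : N.S, f (Sum.inr (Sum.inl u)) = false) ∧
    (∀ u : N.T, f (Sum.inr (Sum.inr u)) = true) ∧
    (∀ e : N.E, e ∈ C ↔ f (N.ends e 0) ≠ f (N.ends e 1))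

/-- The quantum min-cut: the minimum over edge cut sets of the product of capacities. -/
noncomputable def QMC : ℕ :=
  sInf {m : ℕ | ∃ C : Finset N.E, N.IsCutSet C ∧ m = ∏ e ∈ C, N.c e}

end TN

/-!
For a cut, the vertices on the output side and those on the input side share only the indices on
the cut edges. So the contracted map factors through the tensor product of the spaces on these
edges, and its rank is at most the product of their capacities.

Conversely, replace an edge of capacity `d ^ m` by `m` parallel strands, each carrying a label in
`Fin d`. By integral max-flow min-cut there are as many edge-disjoint paths of strands from inputs
to outputs as strands in some cut. The tensors which force the label to be constant along every path
transmit an arbitrary label on each path, and thus have a contraction of rank at least the product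
of the capacities of the cut edges. The labels of strands off the paths are summed over; since all
entries are nonnegative, nothing cancels.
-/

section Matrix

variable {R m n : Type*} [Fintype n]

theorem rank_sum_mul_le_of_dependsOn [CommSemiring R] [StrongRankCondition R]
    {ι : Type*} [Fintype ι] [DecidableEq ι] {X : ι → Type*} [∀ i, Fintype (X i)]
    {P : m → (∀ i, X i) → R} {Q : n → (∀ i, X i) → R} {A B : Set ι}
    (hP : ∀ x, DependsOn (P x) A) (hQ : ∀ y, DependsOn (Q y) B) :
    (Matrix.of fun x y => ∑ W, P x W * Q y W).rank ≤
      ∏ i with i ∈ A ∧ i ∈ B, Fintype.card (X i) := by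
  rcases isEmpty_or_nonempty (∀ i, X i) with _ | ⟨⟨W₀⟩⟩
  · have hzero : (Matrix.of fun x y => ∑ W, P x W * Q y W) = 0 := by ext; simp
    have := nontrivial_of_invariantBasisNumber R
    simp only [hzero, Matrix.rank_zero, Nat.zero_le]
  let split := Equiv.piEquivPiSubtypeProd (fun i => i ∈ A ∧ i ∈ B) X
  let splitOff := Equiv.piEquivPiSubtypeProd (fun i : {i // ¬(i ∈ A ∧ i ∈ B)} => i.1 ∈ A) (X ·.1)
  let W₁ := splitOff fun i => W₀ i
  let L : Matrix m (∀ i : {i // i ∈ A ∧ i ∈ B}, X i) R :=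
    .of fun x k => ∑ l, P x (split.symm (k, splitOff.symm (l, W₁.2)))
  let M : Matrix (∀ i : {i // i ∈ A ∧ i ∈ B}, X i) n R :=
    .of fun k y => ∑ r, Q y (split.symm (k, splitOff.symm (W₁.1, r)))
  have hfactor : (Matrix.of fun x y => ∑ W, P x W * Q y W) = L * M := by
    ext x y
    simp only [Matrix.mul_apply, L, M, Matrix.of_apply, Finset.sum_mul_sum]
    rw [← split.symm.sum_comp, Fintype.sum_prod_type]
    refine Finset.sum_congr rfl fun k _ => ?_
    rw [← splitOff.symm.sum_comp, Fintype.sum_prod_type]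
    refine Finset.sum_congr rfl fun l _ => Finset.sum_congr rfl fun r _ => ?_
    congr 1
    · refine hP x fun i hi => ?_
      by_cases hB : i ∈ B <;> simp [split, splitOff, hi, hB]
    · refine hQ y fun i hi => ?_
      by_cases hA : i ∈ A <;> simp [split, splitOff, hi, hA]
  calc (Matrix.of fun x y => ∑ W, P x W * Q y W).rank
      = (L * M).rank := by rw [hfactor]
    _ ≤ L.rank := Matrix.rank_mul_le_left L M
    _ ≤ Fintype.card (∀ i : {i // i ∈ A ∧ i ∈ B}, X i) := L.rank_le_card_width
    _ = ∏ i with i ∈ A ∧ i ∈ B, Fintype.card (X i) := by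
      rw [Fintype.card_pi]
      exact (Finset.prod_subtype _ (by simp) fun i => Fintype.card (X i)).symm

theorem card_le_rank_of_apply_ne_zero_iff [Field R] {K : Type*} [Fintype K]
    (M : Matrix m n R) (row : K → m) (col : K → n)
    (h : ∀ x y, M (row x) (col y) ≠ 0 ↔ x = y) : Fintype.card K ≤ M.rank := by
  have hdiag : M.submatrix row col = Matrix.diagonal fun x => M (row x) (col x) := by
    ext x y
    rcases eq_or_ne x y with rfl | hxy
    · simp
    · simpa [Matrix.diagonal_apply_ne _ hxy] using mt (h x y).1 hxy
  calc Fintype.card K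
      = Fintype.card {x // M (row x) (col x) ≠ 0} :=
        (Fintype.card_congr (Equiv.subtypeUnivEquiv fun x => (h x x).2 rfl)).symm
    _ = (M.submatrix row col).rank := by rw [hdiag, Matrix.rank_diagonal]
    _ ≤ M.rank := M.rank_submatrix_le row col

end Matrix

section PartialBijection

variable {α D : Type*} {p q : α → Prop} (σ : {a // ¬p a} ≃ {a // ¬q a})

theorem sum_subtype_eq_of_map_eq [Fintype α] {M : Type*} [AddCancelCommMonoid M] {g : α → M}
    (hg : ∀ a, g (σ a) = g a) : ∑ a : {a // p a}, g a = ∑ a : {a // q a}, g a := by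
  refine add_right_cancel (b := ∑ a : {a // ¬p a}, g a) ?_
  calc ∑ a : {a // p a}, g a + ∑ a : {a // ¬p a}, g a
      = ∑ a : {a // q a}, g a + ∑ a : {a // ¬q a}, g a := by
        simp only [Fintype.sum_subtype_add_sum_subtype]
    _ = ∑ a : {a // q a}, g a + ∑ a : {a // ¬p a}, g a := by
        simp only [← σ.sum_comp, hg]

theorem eq_of_map_eq_of_eq [Finite α] {w w' : α → D} (hw : ∀ a, w (σ a) = w a)
    (hw' : ∀ a, w' (σ a) = w' a) (h : ∀ a, p a → w a = w' a) {a : α} (ha : q a) :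
    w a = w' a := by
  have := Fintype.ofFinite α
  -- `σ` preserves disagreement, so as many elements disagree in `p` as in `q`.
  let disagreement : α → ℕ := fun a => if w a = w' a then 0 else 1
  have hsum : ∑ a : {a // q a}, disagreement a = 0 := by
    rw [← sum_subtype_eq_of_map_eq σ fun a => by simp only [disagreement, hw, hw']]
    exact Finset.sum_eq_zero fun a _ => if_pos (h a a.2)
  simpa [disagreement] using Finset.sum_eq_zero_iff.1 hsum ⟨a, ha⟩ (Finset.mem_univ _)

theorem exists_map_eq_extension [Nonempty D] (x : {a // q a} → D) :
    ∃ w : α → D, (∀ a, w (σ a) = w a) ∧ ∀ a : {a // q a}, w a = x a := by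
  -- The value at `a` is that of `x` at the start of the `σ`-path through `a`, and arbitrary if `a`
  -- lies on a cycle.
  let step : α → α → Prop := fun a b => ∃ h : ¬p a, (σ ⟨a, h⟩ : α) = b
  let origins : α → Set {a // q a} := fun b => {a | Relation.ReflTransGen step a b}
  have origins_map (a) : origins (σ a) = origins a := by
    ext s
    refine ⟨fun hs => ?_, fun hs => hs.tail ⟨a.2, rfl⟩⟩
    rcases hs.cases_tail with heq | ⟨b, hsb, hb, hba⟩
    · exact absurd (heq ▸ s.2) (σ a).2
    · rwa [← σ.injective (Subtype.ext hba)]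
  have origins_of_initial (s : {a // q a}) : origins s = {s} := by
    ext t
    refine ⟨fun ht => ?_, fun ht => by rw [Set.mem_singleton_iff.1 ht]; exact .refl⟩
    rcases ht.cases_tail with heq | ⟨b, -, hb, hbs⟩
    · exact Subtype.ext heq.symm
    · exact absurd (hbs ▸ s.2) (σ ⟨b, hb⟩).2
  refine ⟨Function.extend singleton x (fun _ => Classical.arbitrary D) ∘ origins,
    fun a => by simp only [Function.comp_apply, origins_map], fun s => ?_⟩
  rw [Function.comp_apply, origins_of_initial, Set.singleton_injective.extend_apply]

end PartialBijection
/-- A graph with edges `U` on the vertices `X`, together with disjoint sets of terminals. -/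
structure TerminalGraph (X U : Type*) where
  ends : U → Fin 2 → X
  source : Set X
  sink : Set X
  disjoint_source_sink : Disjoint source sink

/-- A network whose flow along an edge `u` is an integer between `lower u` and `upper u`, positive
if it runs from `ends u 0` to `ends u 1` and negative if it runs the other way. Undirected edges are
thus those with `lower u = -upper u`. -/
structure FlowNetwork (X U : Type*) extends TerminalGraph X U where
  lower : U → ℤ
  upper : U → ℤ

namespace FlowNetwork

variable {X U : Type*} [Fintype U] (G : FlowNetwork X U)

/-- The net inflow at each vertex, as the boundary of the `1`-chain `f`. -/
noncomputable def boundary : (U → ℤ) →ₗ[ℤ] X → ℤ :=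
  Fintype.linearCombination ℤ fun u => Pi.single (G.ends u 1) 1 - Pi.single (G.ends u 0) 1

/-- The feasible flows: within the edge bounds and conserved outside sources and sinks. -/
structure IsFlow (f : U → ℤ) : Prop where
  mem_Icc : f ∈ Set.Icc G.lower G.upper
  conserved : ∀ x ∉ G.source, x ∉ G.sink → G.boundary f x = 0

/-- The total inflow of `f` into the sinks. -/
noncomputable def value [Fintype X] (f : U → ℤ) : ℤ := ∑ x with x ∈ G.sink, G.boundary f x

/-- A cut, represented by its source side. -/
def IsCut (Y : Set X) : Prop := G.source ⊆ Y ∧ Disjoint Y G.sink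

/-- The largest amount of flow that the edge bounds allow to leave `Y`. -/
noncomputable def cutCapacity (Y : Set X) : ℤ :=
  ∑ u, if G.ends u 0 ∈ Y ∧ G.ends u 1 ∉ Y then G.upper u
    else if G.ends u 0 ∉ Y ∧ G.ends u 1 ∈ Y then -G.lower u else 0

/-- Every vertex of `Y` can receive one more unit of flow from a source than it does under `f`,
by a change of `f` on edges inside `Y` only. The latter is what lets `Y` grow along a residual
edge leaving it, without the need for simple augmenting paths. -/
def IsAugmentable (f : U → ℤ) (Y : Set X) : Prop :=
  ∀ x ∈ Y, ∃ g ∈ Set.Icc G.lower G.upper, (∀ u, g u ≠ f u → ∀ i, G.ends u i ∈ Y) ∧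
    ∃ s ∈ G.source, G.boundary g = G.boundary f + Pi.single x 1 - Pi.single s 1

variable {G} {f : U → ℤ}

theorem sum_boundary (A : Finset X) : ∑ x ∈ A, G.boundary f x =
    ∑ u, f u * ((if G.ends u 1 ∈ A then 1 else 0) - (if G.ends u 0 ∈ A then 1 else 0)) := by
  simp only [boundary, Fintype.linearCombination_apply, Finset.sum_apply, Pi.smul_apply,
    Pi.sub_apply, smul_eq_mul]
  rw [Finset.sum_comm]
  simp only [← Finset.mul_sum, Finset.sum_sub_distrib, Finset.sum_pi_single']

theorem isAugmentable_source (hf : f ∈ Set.Icc G.lower G.upper) :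
    G.IsAugmentable f G.source :=
  fun x hx => ⟨f, hf, fun _ hu => absurd rfl hu, x, hx, by abel⟩

theorem IsAugmentable.insert {Y : Set X} (hY : G.IsAugmentable f Y) {x y : X} (hx : x ∈ Y)
    (hy : y ∉ Y) {u : U} {t : ℤ} (hu : G.lower u ≤ f u + t ∧ f u + t ≤ G.upper u)
    (hends : ∀ i, G.ends u i = x ∨ G.ends u i = y) (hyu : ∃ i, G.ends u i = y)
    (ht : G.boundary (Pi.single u t) = Pi.single y 1 - Pi.single x 1) :
    G.IsAugmentable f (insert y Y) := by
  rintro z (rfl | hz)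
  · obtain ⟨g, ⟨hlower, hupper⟩, hgY, s, hs, hboundary⟩ := hY x hx
    have hgu : g u = f u := by
      by_contra hne
      obtain ⟨i, rfl⟩ := hyu
      exact hy (hgY u hne i)
    refine ⟨g + Pi.single u t, ⟨fun w => ?_, fun w => ?_⟩, fun w hw i => ?_, s, hs, ?_⟩
    · rcases eq_or_ne w u with rfl | hwu
      · simpa [hgu] using hu.1
      · simpa [hwu] using hlower w
    · rcases eq_or_ne w u with rfl | hwu
      · simpa [hgu] using hu.2
      · simpa [hwu] using hupper w
    · rcases eq_or_ne w u with rfl | hwu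
      · rcases hends i with h | h <;> simp [h, hx]
      · exact .inr (hgY w (by simpa [hwu] using hw) i)
    · rw [map_add, hboundary, ht]
      abel
  · obtain ⟨g, hg, hgY, hboundary⟩ := hY z hz
    exact ⟨g, hg, fun u hu i => .inr (hgY u hu i), hboundary⟩

theorem exists_isAugmentable_saturated [Finite X] (hf : f ∈ Set.Icc G.lower G.upper) :
    ∃ Y, G.source ⊆ Y ∧ G.IsAugmentable f Y ∧
      (∀ u, G.ends u 0 ∈ Y → G.ends u 1 ∉ Y → f u = G.upper u) ∧
      ∀ u, G.ends u 0 ∉ Y → G.ends u 1 ∈ Y → f u = G.lower u := by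
  obtain ⟨Y, hsource, hY⟩ := Finite.exists_le_maximal (isAugmentable_source hf)
  have not_insert {y : X} (hy : y ∉ Y) : ¬G.IsAugmentable f (insert y Y) :=
    fun h => hy (hY.2 h (Set.subset_insert y Y) (Set.mem_insert y Y))
  refine ⟨Y, hsource, hY.1, fun u h₀ h₁ => ?_, fun u h₀ h₁ => ?_⟩
  · by_contra hne
    have hlt : f u < G.upper u := lt_of_le_of_ne (hf.2 u) hne
    have hle : G.lower u ≤ f u := hf.1 u
    refine not_insert h₁ (hY.1.insert h₀ h₁ (t := 1) ⟨by omega, by omega⟩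
      (Fin.forall_fin_two.2 ⟨.inl rfl, .inr rfl⟩) ⟨1, rfl⟩ ?_)
    simp [boundary]
  · by_contra hne
    have hlt : G.lower u < f u := lt_of_le_of_ne (hf.1 u) (Ne.symm hne)
    have hle : f u ≤ G.upper u := hf.2 u
    refine not_insert h₀ (hY.1.insert h₁ h₀ (t := -1) ⟨by omega, by omega⟩
      (Fin.forall_fin_two.2 ⟨.inr rfl, .inl rfl⟩) ⟨0, rfl⟩ ?_)
    simp [boundary]

section MaxFlow

variable [Fintype X]

theorem IsFlow.value_eq_sum_boundary (hf : G.IsFlow f) {Y : Set X} (hY : G.IsCut Y) :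
    G.value f = ∑ x with x ∉ Y, G.boundary f x := by
  refine Finset.sum_subset (fun x hx => ?_) fun x hx hx' => ?_
  · simp only [Finset.mem_filter_univ] at hx ⊢
    exact Set.disjoint_right.1 hY.2 hx
  · simp only [Finset.mem_filter_univ] at hx hx'
    exact hf.conserved x (fun h => hx (hY.1 h)) hx'

theorem IsFlow.value_eq_cutCapacity (hf : G.IsFlow f) {Y : Set X} (hY : G.IsCut Y)
    (hupper : ∀ u, G.ends u 0 ∈ Y → G.ends u 1 ∉ Y → f u = G.upper u)
    (hlower : ∀ u, G.ends u 0 ∉ Y → G.ends u 1 ∈ Y → f u = G.lower u) :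
    G.value f = G.cutCapacity Y := by
  rw [hf.value_eq_sum_boundary hY, sum_boundary, cutCapacity]
  refine Finset.sum_congr rfl fun u _ => ?_
  by_cases h₀ : G.ends u 0 ∈ Y <;> by_cases h₁ : G.ends u 1 ∈ Y
  · simp [h₀, h₁]
  · simp [h₀, h₁, hupper u h₀ h₁]
  · simp [h₀, h₁, hlower u h₀ h₁]
  · simp [h₀, h₁]

theorem IsFlow.exists_value_lt (hf : G.IsFlow f) {Y : Set X} (hY : G.IsAugmentable f Y)
    {x : X} (hxY : x ∈ Y) (hx : x ∈ G.sink) : ∃ g, G.IsFlow g ∧ G.value f < G.value g := by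
  obtain ⟨g, hg, -, s, hs, hboundary⟩ := hY x hxY
  have hs' : s ∉ G.sink := Set.disjoint_left.1 G.disjoint_source_sink hs
  refine ⟨g, ⟨hg, fun z hzs hzt => ?_⟩, ?_⟩
  · have hzx : z ≠ x := fun h => hzt (h ▸ hx)
    have hzs' : z ≠ s := fun h => hzs (h ▸ hs)
    simp [hboundary, hf.conserved z hzs hzt, hzx, hzs']
  · have hvalue : G.value g = G.value f + 1 := by
      simp [value, hboundary, Finset.sum_add_distrib, Finset.sum_sub_distrib, hx, hs']
    omega

theorem exists_isFlow_value_eq_cutCapacity (hf : G.IsFlow f) :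
    ∃ g Y, G.IsFlow g ∧ G.IsCut Y ∧ G.value g = G.cutCapacity Y := by
  have hfinite : {g | G.IsFlow g}.Finite :=
    (Set.finite_Icc G.lower G.upper).subset fun g hg => hg.mem_Icc
  obtain ⟨g, hg, hmax⟩ := Set.exists_max_image _ G.value hfinite ⟨f, hf⟩
  obtain ⟨Y, hsource, hY, hupper, hlower⟩ := exists_isAugmentable_saturated hg.mem_Icc
  have hcut : G.IsCut Y := by
    refine ⟨hsource, Set.disjoint_left.2 fun x hxY hx => ?_⟩
    obtain ⟨g', hg', hlt⟩ := hg.exists_value_lt hY hxY hx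
    exact (hmax g' hg').not_gt hlt
  exact ⟨g, Y, hg, hcut, hg.value_eq_cutCapacity hcut hupper hlower⟩

end MaxFlow

end FlowNetwork

namespace TerminalGraph

variable {X U : Type*} (H : TerminalGraph X U)

/-- The network in which every edge carries at most one unit of flow, in either direction, except
that no flow enters a source or leaves a sink. -/
noncomputable def unitNetwork : FlowNetwork X U where
  toTerminalGraph := H
  lower u := if H.ends u 0 ∈ H.source ∨ H.ends u 1 ∈ H.sink then 0 else -1
  upper u := if H.ends u 1 ∈ H.source ∨ H.ends u 0 ∈ H.sink then 0 else 1

/-- The end of an edge at which a flow of sign `z` arrives. -/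
def headEnd (z : ℤ) : Fin 2 := if 0 < z then 1 else 0

/-- The vertex at which the flow `f` along an edge arrives. -/
abbrev head (f : U → ℤ) (u : {u // f u ≠ 0}) : X := H.ends u (headEnd (f u))

/-- The vertex from which the flow `f` along an edge departs. -/
abbrev tail (f : U → ℤ) (u : {u // f u ≠ 0}) : X := H.ends u (headEnd (f u)).rev

/-- Edge-disjoint directed paths from the sources to the sinks, possibly together with directed
cycles. The path through a used edge `u` enters the vertex `ends u (headEnd u)` and, unless that is
a sink, continues along `next u`. -/
structure Routing where
  arcs : Set U
  headEnd : arcs → Fin 2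
  next : {u : arcs // H.ends u (headEnd u) ∉ H.sink} ≃
    {u : arcs // H.ends u (headEnd u).rev ∉ H.source}
  tail_next : ∀ u, H.ends (next u).1 (headEnd (next u)).rev = H.ends u.1 (headEnd u)

variable {H}

/-- The vertex at which a directed edge of `R` arrives. -/
abbrev Routing.head (R : H.Routing) (u : R.arcs) : X := H.ends u (R.headEnd u)

/-- The vertex from which a directed edge of `R` departs. -/
abbrev Routing.tail (R : H.Routing) (u : R.arcs) : X := H.ends u (R.headEnd u).rev

variable [Fintype U] {f : U → ℤ}

theorem Routing.card_tail_mem_source (R : H.Routing) :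
    Fintype.card {u // R.tail u ∈ H.source} = Fintype.card {u // R.head u ∈ H.sink} := by
  simpa using (sum_subtype_eq_of_map_eq R.next (g := fun _ => (1 : ℕ)) fun _ => rfl).symm

theorem isFlow_unitNetwork_zero : H.unitNetwork.IsFlow 0 where
  mem_Icc := by
    constructor <;> intro u <;> simp only [unitNetwork, Pi.zero_apply] <;> split_ifs <;> simp
  conserved _ _ _ := by simp

theorem cutCapacity_unitNetwork {Y : Set X} (hY : H.unitNetwork.IsCut Y) :
    H.unitNetwork.cutCapacity Y = Fintype.card {u // ¬(H.ends u 0 ∈ Y ↔ H.ends u 1 ∈ Y)} := by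
  have notMem_sink {x : X} (hx : x ∈ Y) : x ∉ H.sink := Set.disjoint_left.1 hY.2 hx
  have notMem_source {x : X} (hx : x ∉ Y) : x ∉ H.source := fun h => hx (hY.1 h)
  rw [Fintype.card_subtype, Finset.card_filter, Nat.cast_sum, FlowNetwork.cutCapacity]
  refine Finset.sum_congr rfl fun u _ => ?_
  by_cases h₀ : H.ends u 0 ∈ Y <;> by_cases h₁ : H.ends u 1 ∈ Y
  · simp [unitNetwork, h₀, h₁]
  · simp [unitNetwork, h₀, h₁, notMem_sink h₀, notMem_source h₁]
  · simp [unitNetwork, h₀, h₁, notMem_sink h₁, notMem_source h₀]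
  · simp [unitNetwork, h₀, h₁]

theorem eq_one_or_eq_neg_one_of_isFlow (hf : H.unitNetwork.IsFlow f) {u : U} (hu : f u ≠ 0) :
    (f u = 1 ∧ H.ends u 1 ∉ H.source ∧ H.ends u 0 ∉ H.sink) ∨
      (f u = -1 ∧ H.ends u 0 ∉ H.source ∧ H.ends u 1 ∉ H.sink) := by
  have hlower : (if H.ends u 0 ∈ H.source ∨ H.ends u 1 ∈ H.sink then 0 else -1) ≤ f u :=
    hf.mem_Icc.1 u
  have hupper : f u ≤ if H.ends u 1 ∈ H.source ∨ H.ends u 0 ∈ H.sink then 0 else 1 :=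
    hf.mem_Icc.2 u
  grind

theorem head_notMem_source (hf : H.unitNetwork.IsFlow f) (u : {u // f u ≠ 0}) :
    H.head f u ∉ H.source := by
  rcases eq_one_or_eq_neg_one_of_isFlow hf u.2 with h | h <;> simp [head, headEnd, h]

theorem tail_notMem_sink (hf : H.unitNetwork.IsFlow f) (u : {u // f u ≠ 0}) :
    H.tail f u ∉ H.sink := by
  rcases eq_one_or_eq_neg_one_of_isFlow hf u.2 with h | h <;> simp [tail, headEnd, h]

theorem sum_boundary_eq_card_sub_card (hf : H.unitNetwork.IsFlow f) (A : Finset X) :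
    ∑ x ∈ A, H.unitNetwork.boundary f x =
      Fintype.card {u // H.head f u ∈ A} - Fintype.card {u // H.tail f u ∈ A} := by
  have hunused : ∑ u : {u // ¬f u ≠ 0}, f u *
      ((if H.ends u 1 ∈ A then 1 else 0) - (if H.ends u 0 ∈ A then 1 else 0)) = 0 :=
    Finset.sum_eq_zero fun u _ => by rw [not_not.1 u.2, zero_mul]
  have hsum : ∑ x ∈ A, H.unitNetwork.boundary f x = ∑ u, f u *
      ((if H.ends u 1 ∈ A then 1 else 0) - (if H.ends u 0 ∈ A then 1 else 0)) :=
    FlowNetwork.sum_boundary A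
  rw [hsum, ← Fintype.sum_subtype_add_sum_subtype (fun u => f u ≠ 0), hunused, add_zero,
    Fintype.card_subtype, Fintype.card_subtype, Finset.card_filter, Finset.card_filter,
    Nat.cast_sum, Nat.cast_sum, ← Finset.sum_sub_distrib]
  refine Finset.sum_congr rfl fun ⟨u, hu⟩ _ => ?_
  rcases eq_one_or_eq_neg_one_of_isFlow hf hu with h | h <;> simp [h.1, head, tail, headEnd]

theorem card_head_eq_card_tail (hf : H.unitNetwork.IsFlow f) {x : X}
    (hsource : x ∉ H.source) (hsink : x ∉ H.sink) :
    Fintype.card {u // H.head f u = x} = Fintype.card {u // H.tail f u = x} := by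
  have hsum := sum_boundary_eq_card_sub_card hf {x}
  simp only [Finset.sum_singleton, hf.conserved x hsource hsink, Finset.mem_singleton] at hsum
  exact_mod_cast (sub_eq_zero.1 hsum.symm)

theorem card_head_mem_sink [Fintype X] (hf : H.unitNetwork.IsFlow f) :
    (Fintype.card {u // H.head f u ∈ H.sink} : ℤ) = H.unitNetwork.value f := by
  have hsum := sum_boundary_eq_card_sub_card hf {x | x ∈ H.sink}
  simp only [Finset.mem_filter_univ, tail_notMem_sink hf, Fintype.card_of_isEmpty, Nat.cast_zero,
    sub_zero] at hsum
  exact hsum.symm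

theorem nonempty_head_fiber_equiv_tail_fiber (hf : H.unitNetwork.IsFlow f) (x : X) :
    Nonempty ({u : {u // H.head f u ∉ H.sink} // H.head f u = x} ≃
      {u : {u // H.tail f u ∉ H.source} // H.tail f u = x}) := by
  by_cases hx : x ∈ H.source ∨ x ∈ H.sink
  · have : IsEmpty {u : {u // H.head f u ∉ H.sink} // H.head f u = x} :=
      Subtype.isEmpty_of_false fun u hu =>
        hx.elim (hu ▸ head_notMem_source hf u) (hu ▸ u.2)
    have : IsEmpty {u : {u // H.tail f u ∉ H.source} // H.tail f u = x} :=
      Subtype.isEmpty_of_false fun u hu =>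
        hx.elim (hu ▸ u.2) (hu ▸ tail_notMem_sink hf u)
    exact ⟨Equiv.equivOfIsEmpty _ _⟩
  · obtain ⟨hsource, hsink⟩ := not_or.1 hx
    refine (Fintype.card_eq.1 (card_head_eq_card_tail hf hsource hsink)).map fun e => ?_
    exact ((Equiv.subtypeSubtypeEquivSubtype fun h => h ▸ hsink).trans e).trans
      (Equiv.subtypeSubtypeEquivSubtype fun h => h ▸ hsource).symm

/-- The routing along the edges used by a unit flow. At each vertex the incoming edges are matched
with the outgoing ones, arbitrarily. -/
noncomputable def routingOfIsFlow (hf : H.unitNetwork.IsFlow f) : H.Routing where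
  arcs := {u | f u ≠ 0}
  headEnd u := headEnd (f u)
  next := Equiv.ofFiberEquiv (f := fun u => H.head f u.1) (g := fun u => H.tail f u.1)
    fun x => (nonempty_head_fiber_equiv_tail_fiber hf x).some
  tail_next := Equiv.ofFiberEquiv_map
    (f := fun u : {u // H.head f u ∉ H.sink} => H.head f u.1)
    (g := fun u : {u // H.tail f u ∉ H.source} => H.tail f u.1) _

theorem exists_routing_card_eq_card_cut [Finite X] (H : TerminalGraph X U) :
    ∃ (R : H.Routing) (Y : Set X), H.source ⊆ Y ∧ Disjoint Y H.sink ∧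
      Fintype.card {u // R.tail u ∈ H.source} =
        Fintype.card {u // ¬(H.ends u 0 ∈ Y ↔ H.ends u 1 ∈ Y)} := by
  have := Fintype.ofFinite X
  obtain ⟨f, Y, hf, hY, hvalue⟩ :=
    FlowNetwork.exists_isFlow_value_eq_cutCapacity H.isFlow_unitNetwork_zero
  have hcard : Fintype.card {u // H.head f u ∈ H.sink} =
      Fintype.card {u // ¬(H.ends u 0 ∈ Y ↔ H.ends u 1 ∈ Y)} := by
    exact_mod_cast (card_head_mem_sink hf).trans (hvalue.trans (cutCapacity_unitNetwork hY))
  refine ⟨routingOfIsFlow hf, Y, hY.1, hY.2, ?_⟩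
  rw [Routing.card_tail_mem_source, ← hcard]
  exact Fintype.card_congr (Equiv.refl {u // H.head f u ∈ H.sink})

end TerminalGraph

namespace TN

variable {N : TN}

theorem exists_ends_inEdge (u : N.S) : ∃ i, N.ends (N.inEdge u) i = .inr (.inl u) :=
  ⟨_, (N.openS u).choose_spec.1⟩

theorem exists_ends_outEdge (u : N.T) : ∃ i, N.ends (N.outEdge u) i = .inr (.inr u) :=
  ⟨_, (N.openT u).choose_spec.1⟩

theorem inEdge_eq_of_ends_eq {e : N.E} {i : Fin 2} {u : N.S} (h : N.ends e i = .inr (.inl u)) :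
    N.inEdge u = e :=
  congrArg Prod.fst ((N.openS u).choose_spec.2 (e, i) h).symm

theorem outEdge_eq_of_ends_eq {e : N.E} {i : Fin 2} {u : N.T} (h : N.ends e i = .inr (.inr u)) :
    N.outEdge u = e :=
  congrArg Prod.fst ((N.openT u).choose_spec.2 (e, i) h).symm

section UpperBound

/-- The contribution to the contraction, at the edge indices `W`, of the tensors at the vertices
`F` and of open ends `j` attached to the edges `edge j`, whose indices are prescribed by `x`. -/
noncomputable def partialAmplitude (𝒯 : N.Assignment) (F : Finset N.V) {J : Type*} (edge : J → N.E)
    (x : ∀ j, Fin (N.c (edge j))) (W : ∀ e, Fin (N.c e)) : ℂ :=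
  (if ∀ j, W (edge j) = x j then 1 else 0) * ∏ v ∈ F, 𝒯 v fun p => W p.1.1

theorem dependsOn_partialAmplitude (𝒯 : N.Assignment) {F : Finset N.V} {J : Type*} {edge : J → N.E}
    {A : Set N.E} (hF : ∀ v ∈ F, ∀ e i, N.ends e i = .inl v → e ∈ A) (hedge : ∀ j, edge j ∈ A)
    (x : ∀ j, Fin (N.c (edge j))) : DependsOn (partialAmplitude 𝒯 F edge x) A := by
  intro W W' h
  have htensors : ∀ v ∈ F, (𝒯 v fun p => W p.1.1) = 𝒯 v fun p => W' p.1.1 := fun v hv =>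
    congrArg (𝒯 v) (funext fun p => h _ (hF v hv _ _ p.2))
  simp only [partialAmplitude, h _ (hedge _), Finset.prod_congr rfl htensors]

theorem β_eq_sum_partialAmplitude (𝒯 : N.Assignment) (F : Finset N.V) :
    N.β 𝒯 = Matrix.of fun iT iS => ∑ W,
      partialAmplitude 𝒯 F N.outEdge iT W * partialAmplitude 𝒯 Fᶜ N.inEdge iS W := by
  ext iT iS
  refine Finset.sum_congr rfl fun W _ => ?_
  simp only [partialAmplitude]
  rw [mul_mul_mul_comm, Finset.prod_mul_prod_compl,
    ite_zero_mul_ite_zero, mul_one, ite_mul, one_mul, zero_mul]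
  simp only [and_comm]

theorem rank_β_le_prod_of_isCutSet (𝒯 : N.Assignment) {C : Finset N.E} (hC : N.IsCutSet C) :
    (N.β 𝒯).rank ≤ ∏ e ∈ C, N.c e := by
  obtain ⟨side, hS, hT, hcross⟩ := hC
  have hout (u : N.T) : ∃ i, side (N.ends (N.outEdge u) i) = true :=
    (exists_ends_outEdge u).imp fun i hi => by rw [hi, hT]
  have hin (u : N.S) : ∃ i, side (N.ends (N.inEdge u) i) = false :=
    (exists_ends_inEdge u).imp fun i hi => by rw [hi, hS]
  have mem_C (e : N.E) :
      e ∈ C ↔ (∃ i, side (N.ends e i) = true) ∧ ∃ i, side (N.ends e i) = false := by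
    rw [hcross, Fin.exists_fin_two, Fin.exists_fin_two]
    cases side (N.ends e 0) <;> cases side (N.ends e 1) <;> simp
  let outputSide : Finset N.V := {v | side (.inl v) = true}
  rw [β_eq_sum_partialAmplitude 𝒯 outputSide]
  refine (rank_sum_mul_le_of_dependsOn (A := {e | ∃ i, side (N.ends e i) = true})
    (B := {e | ∃ i, side (N.ends e i) = false})
    (dependsOn_partialAmplitude 𝒯 (fun v hv e i hi => ⟨i, ?_⟩) hout)
    (dependsOn_partialAmplitude 𝒯 (fun v hv e i hi => ⟨i, ?_⟩) hin)).trans_eq ?_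
  · simpa [outputSide, hi] using hv
  · simpa [outputSide, hi] using hv
  · exact Finset.prod_congr (by ext; simp [mem_C]) fun e _ => Fintype.card_fin _

end UpperBound

section LowerBound

theorem β_indicator_ne_zero_iff {P : ∀ v : N.V, (∀ p : N.Legs v, Fin (N.c p.1.1)) → Prop}
    {iT : N.OutIdx} {iS : N.InIdx} :
    N.β (fun v ω => if P v ω then 1 else 0) iT iS ≠ 0 ↔
      ∃ W : ∀ e, Fin (N.c e), (∀ u, W (N.inEdge u) = iS u) ∧ (∀ u, W (N.outEdge u) = iT u) ∧
        ∀ v, P v fun p => W p.1.1 := by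
  have hcount : N.β (fun v ω => if P v ω then 1 else 0) iT iS =
      Finset.card {W : ∀ e, Fin (N.c e) | ((∀ u, W (N.inEdge u) = iS u) ∧
        ∀ u, W (N.outEdge u) = iT u) ∧ ∀ v, P v fun p => W p.1.1} := by
    simp only [β, Finset.prod_ite_zero, Finset.mem_univ, true_imp_iff, Finset.prod_const_one,
      ← ite_and, Finset.sum_boole]
  rw [hcount, Nat.cast_ne_zero, Finset.card_ne_zero, Finset.filter_nonempty_iff]
  simp only [Finset.mem_univ, true_and, and_assoc]

variable {m : N.E → ℕ} {d : ℕ}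

/-- The graph in which each edge `e` is replaced by `m e` parallel strands, with the open ends as
terminals. -/
def strandGraph (m : N.E → ℕ) : TerminalGraph (N.V ⊕ N.S ⊕ N.T) (Σ e, Fin (m e)) where
  ends u := N.ends u.1
  source := Set.range (Sum.inr ∘ Sum.inl)
  sink := Set.range (Sum.inr ∘ Sum.inr)
  disjoint_source_sink := by
    rw [Set.disjoint_range_iff]
    simp

/-- Labels on the edges, as labels in `Fin d` on the strands. -/
def strandLabels (digits : ∀ e, Fin (N.c e) ≃ (Fin (m e) → Fin d)) :
    (∀ e, Fin (N.c e)) ≃ ((Σ e, Fin (m e)) → Fin d) :=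
  (Equiv.piCongrRight digits).trans (Equiv.piCurry fun _ _ => Fin d).symm

/-- Each strand of `R` arriving at `v` has the same label as the next strand, where `ω` are the
indices at the legs of `v`. -/
def IsRouted (digits : ∀ e, Fin (N.c e) ≃ (Fin (m e) → Fin d)) (R : (strandGraph m).Routing)
    (v : N.V) (ω : ∀ p : N.Legs v, Fin (N.c p.1.1)) : Prop :=
  ∀ (u : {u // R.head u ∉ (strandGraph m).sink})
    (h : R.head u = .inl v),
    digits _ (ω ⟨(_, (R.headEnd (R.next u)).rev), (R.tail_next u).trans h⟩) (R.next u).1.1.2 =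
      digits _ (ω ⟨(_, R.headEnd u), h⟩) u.1.1.2

/-- The tensors that pass on the label of each arriving strand of `R` to the next strand, and do
not depend on the strands outside `R`. -/
noncomputable def routingTensors (digits : ∀ e, Fin (N.c e) ≃ (Fin (m e) → Fin d))
    (R : (strandGraph m).Routing) : N.Assignment :=
  fun v ω => if IsRouted digits R v ω then 1 else 0

variable (digits : ∀ e, Fin (N.c e) ≃ (Fin (m e) → Fin d)) (R : (strandGraph m).Routing)

theorem exists_head_eq_inl
    (u : {u // R.head u ∉ (strandGraph m).sink}) :
    ∃ v, R.head u = .inl v := by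
  have hsource : R.head u ∉ (strandGraph m).source :=
    (R.tail_next u).subst (motive := (· ∉ _)) (R.next u).2
  rcases hends : R.head u with v | s | t
  · exact ⟨v, rfl⟩
  · exact absurd ⟨s, hends.symm⟩ hsource
  · exact absurd ⟨t, hends.symm⟩ u.2

theorem β_routingTensors_ne_zero_iff {iT : N.OutIdx} {iS : N.InIdx} :
    N.β (routingTensors digits R) iT iS ≠ 0 ↔
      ∃ W : ∀ e, Fin (N.c e), (∀ u, W (N.inEdge u) = iS u) ∧ (∀ u, W (N.outEdge u) = iT u) ∧
        ∀ u, strandLabels digits W (R.next u).1 = strandLabels digits W u.1 := by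
  refine β_indicator_ne_zero_iff.trans
    (exists_congr fun W => and_congr_right' (and_congr_right' ?_))
  refine ⟨fun h u => ?_, fun h v u _ => h u⟩
  obtain ⟨v, hv⟩ := exists_head_eq_inl R u
  exact h v u hv

theorem strandLabels_eq_of_mem_source {W W' : ∀ e, Fin (N.c e)}
    (h : ∀ s, W (N.inEdge s) = W' (N.inEdge s)) {u : Σ e, Fin (m e)} {i : Fin 2}
    (hu : (strandGraph m).ends u i ∈ (strandGraph m).source) :
    strandLabels digits W u = strandLabels digits W' u := by
  obtain ⟨s, hs⟩ := hu
  have hedge : N.inEdge s = u.1 := inEdge_eq_of_ends_eq hs.symm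
  exact congrArg (fun j => digits u.1 j u.2) (hedge ▸ h s)

theorem strandLabels_eq_of_mem_sink {W W' : ∀ e, Fin (N.c e)}
    (h : ∀ t, W (N.outEdge t) = W' (N.outEdge t)) {u : Σ e, Fin (m e)} {i : Fin 2}
    (hu : (strandGraph m).ends u i ∈ (strandGraph m).sink) :
    strandLabels digits W u = strandLabels digits W' u := by
  obtain ⟨t, ht⟩ := hu
  have hedge : N.outEdge t = u.1 := outEdge_eq_of_ends_eq ht.symm
  exact congrArg (fun j => digits u.1 j u.2) (hedge ▸ h t)

theorem card_le_rank_β_routingTensors [NeZero d] :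
    Fintype.card ({u // R.tail u ∈ (strandGraph m).source} → Fin d) ≤
      (N.β (routingTensors digits R)).rank := by
  choose w hw hwx using exists_map_eq_extension (D := Fin d) R.next
  let W (x) : ∀ e, Fin (N.c e) :=
    (strandLabels digits).symm (Function.extend Subtype.val (w x) fun _ => 0)
  have hW (x) (u : R.arcs) : strandLabels digits (W x) u = w x u := by
    rw [Equiv.apply_symm_apply, Subtype.val_injective.extend_apply]
  refine card_le_rank_of_apply_ne_zero_iff _ (fun x u => W x (N.outEdge u))
    (fun x u => W x (N.inEdge u)) fun x y => ?_
  refine (β_routingTensors_ne_zero_iff digits R).trans ⟨?_, ?_⟩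
  · rintro ⟨W', hin, hout, hnext⟩
    have hsink (u) (hu : R.head u ∈ (strandGraph m).sink) : strandLabels digits W' u = w x u :=
      (strandLabels_eq_of_mem_sink digits hout hu).trans (hW x u)
    funext u
    calc x u = w x u := (hwx x u).symm
      _ = strandLabels digits W' u := (eq_of_map_eq_of_eq R.next hnext (hw x) hsink u.2).symm
      _ = strandLabels digits (W y) u := strandLabels_eq_of_mem_source digits hin u.2
      _ = w y u := hW y u
      _ = y u := hwx y u
  · rintro rfl
    exact ⟨W x, fun _ => rfl, fun _ => rfl, fun u => by rw [hW, hW, hw]⟩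

theorem isCutSet_of_inputs_mem_of_outputs_notMem {Y : Set (N.V ⊕ N.S ⊕ N.T)}
    (hin : ∀ s, .inr (.inl s) ∈ Y) (hout : ∀ t, .inr (.inr t) ∉ Y) :
    N.IsCutSet {e | ¬(N.ends e 0 ∈ Y ↔ N.ends e 1 ∈ Y)} := by
  refine ⟨fun x => decide (x ∉ Y), fun s => ?_, fun t => ?_, fun e => ?_⟩
  · simpa using hin s
  · simpa using hout t
  · simp

theorem prod_eq_pow_card_strands (hm : ∀ e, N.c e = d ^ m e) (p : N.E → Prop) [DecidablePred p] :
    ∏ e with p e, N.c e = d ^ Fintype.card {u : Σ e, Fin (m e) // p u.1} := by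
  simp only [hm, Finset.prod_pow_eq_pow_sum]
  rw [Fintype.card_subtype, Finset.card_filter, Fintype.sum_sigma, Finset.sum_filter]
  exact congrArg (d ^ ·) (Finset.sum_congr rfl fun e _ => by split_ifs <;> simp)

theorem exists_isCutSet_prod_le_rank [NeZero d] (hm : ∀ e, N.c e = d ^ m e) :
    ∃ 𝒯 : N.Assignment, ∃ C, N.IsCutSet C ∧ ∏ e ∈ C, N.c e ≤ (N.β 𝒯).rank := by
  obtain ⟨R, Y, hsource, hsink, hcard⟩ := (strandGraph m).exists_routing_card_eq_card_cut
  let digits (e : N.E) : Fin (N.c e) ≃ (Fin (m e) → Fin d) :=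
    (finCongr (hm e)).trans finFunctionFinEquiv.symm
  refine ⟨routingTensors digits R, _, isCutSet_of_inputs_mem_of_outputs_notMem (Y := Y)
    (fun s => hsource ⟨s, rfl⟩) (fun t => Set.disjoint_right.1 hsink ⟨t, rfl⟩), ?_⟩
  have hrank := card_le_rank_β_routingTensors digits R
  rw [Fintype.card_fun, Fintype.card_fin, hcard] at hrank
  exact (prod_eq_pow_card_strands hm _).trans_le hrank

end LowerBound

end TN

/-- Quantum max-flow/min-cut theorem: if every edge capacity is a power of a fixed
integer `d > 0`, then the quantum max-flow equals the quantum min-cut. -/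
theorem stmt_1 (N : TN) (d : ℕ) (hd : 0 < d)
    (h : ∀ e : N.E, ∃ m : ℕ, N.c e = d ^ m) :
    N.QMF = N.QMC := by
  choose m hm using h
  have : NeZero d := ⟨hd.ne'⟩
  obtain ⟨𝒯, C, hC, hle⟩ := TN.exists_isCutSet_prod_le_rank hm
  have rank_le_prod : ∀ 𝒯', ∀ C', N.IsCutSet C' → (N.β 𝒯').rank ≤ ∏ e ∈ C', N.c e :=
    fun 𝒯' _ hC' => TN.rank_β_le_prod_of_isCutSet 𝒯' hC'
  apply le_antisymm
  · refine csSup_le ⟨_, 𝒯, rfl⟩ ?_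
    rintro _ ⟨𝒯', rfl⟩
    refine le_csInf ⟨_, C, hC, rfl⟩ ?_
    rintro _ ⟨C', hC', rfl⟩
    exact rank_le_prod 𝒯' C' hC'
  · have hbdd : BddAbove {r | ∃ 𝒯' : N.Assignment, (N.β 𝒯').rank = r} := by
      refine ⟨∏ e ∈ C, N.c e, ?_⟩
      rintro _ ⟨𝒯', rfl⟩
      exact rank_le_prod 𝒯' C hC
    calc N.QMC ≤ ∏ e ∈ C, N.c e := Nat.sInf_le ⟨C, hC, rfl⟩
      _ ≤ (N.β 𝒯).rank := hle
      _ ≤ N.QMF := le_csSup hbdd ⟨𝒯, rfl⟩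
end

section
/- If a tensor network (G,c) has all edge capacities at least d_min and the underlying classical min-cut (counting each edge with capacity 1) has cardinality C, then the quantum max-flow satisfies QMF(G,c) ≥ d_min^C. -/
open scoped Classical

/-!
Call a set of edges separating if it meets every cut between inputs and outputs. If every cut has
at least `k` edges, the edges contain `k` disjoint separating sets: following Lovász's proof of the
branching theorem, grow a separating set edge by edge from the inputs, never using an edge of a cut
that can spare no more; submodularity of the cut function guarantees that such an edge exists.

Label the edges by these sets, and let the tensor at each vertex be the indicator that legs with the
same label carry the same index. Since each of the `k` label classes connects the inputs to the
outputs, the contracted map copies `k` independent indices below `d` from the input to the output,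
so it has a diagonal submatrix of size `d ^ k` without zeros on the diagonal.
-/

section Menger

variable {X E : Type*} {ends : E → Fin 2 → X} {A B R W W' : Set X} {F P : Finset E} {k : ℕ} {e : E}

/-- The cut of `F` at `W`: the edges in `F` with exactly one of their two ends in `W`. -/
noncomputable def crossingEdges (ends : E → Fin 2 → X) (F : Finset E) (W : Set X) : Finset E :=
  {e ∈ F | ¬(ends e 0 ∈ W ↔ ends e 1 ∈ W)}

theorem mem_crossingEdges :
    e ∈ crossingEdges ends F W ↔ e ∈ F ∧ ¬(ends e 0 ∈ W ↔ ends e 1 ∈ W) :=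
  Finset.mem_filter

theorem card_crossingEdges_inter_add_card_crossingEdges_union_le
    (ends : E → Fin 2 → X) (F : Finset E) (W W' : Set X) :
    (crossingEdges ends F (W ∩ W')).card + (crossingEdges ends F (W ∪ W')).card ≤
      (crossingEdges ends F W).card + (crossingEdges ends F W').card := by
  simp only [crossingEdges, Finset.card_filter, ← Finset.sum_add_distrib, Set.mem_inter_iff,
    Set.mem_union]
  refine Finset.sum_le_sum fun e _ ↦ ?_
  by_cases h₀ : ends e 0 ∈ W <;> by_cases h₀' : ends e 0 ∈ W' <;>
    by_cases h₁ : ends e 1 ∈ W <;> by_cases h₁' : ends e 1 ∈ W' <;> simp [h₀, h₀', h₁, h₁']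

/-- `W` is the source side of a cut separating the node set `A` from the node set `B`. -/
def IsSeparation (A B W : Set X) : Prop :=
  A ⊆ W ∧ Disjoint B W

theorem IsSeparation.inter (hW : IsSeparation A B W) (hW' : IsSeparation A B W') :
    IsSeparation A B (W ∩ W') :=
  ⟨Set.subset_inter hW.1 hW'.1, hW.2.mono_right Set.inter_subset_left⟩

theorem IsSeparation.union (hW : IsSeparation A B W) (hW' : IsSeparation A B W') :
    IsSeparation A B (W ∪ W') :=
  ⟨hW.1.trans Set.subset_union_left, Set.disjoint_union_right.2 ⟨hW.2, hW'.2⟩⟩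

/-- A stage in the growth of a separating edge set: the edges `P` taken from `F` so far connect `A`
to all of `R`, and every cut between `A` and `B` keeps at least `k` edges outside `P`. Connectedness
is expressed by cuts: a set containing `A` but not `R` is crossed by `P`. -/
structure IsSparingGrowth (ends : E → Fin 2 → X) (A B : Set X) (F : Finset E) (k : ℕ)
    (P : Finset E) (R : Set X) : Prop where
  subset_edges : P ⊆ F
  subset_reached : A ⊆ R
  ends_mem : ∀ e ∈ P, ∀ j, ends e j ∈ R
  crossingEdges_nonempty : ∀ W, A ⊆ W → ¬R ⊆ W → (crossingEdges ends P W).Nonempty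
  le_card_sdiff : ∀ W, IsSeparation A B W → k ≤ (crossingEdges ends (F \ P) W).card

theorem isSparingGrowth_empty
    (hF : ∀ W, IsSeparation A B W → k ≤ (crossingEdges ends F W).card) :
    IsSparingGrowth ends A B F k ∅ A where
  subset_edges := Finset.empty_subset F
  subset_reached := subset_rfl
  ends_mem := by simp
  crossingEdges_nonempty := fun _ hA hR ↦ absurd hA hR
  le_card_sdiff := by simpa using hF

theorem IsSparingGrowth.crossingEdges_sdiff (h : IsSparingGrowth ends A B F k P R) (hRW : R ⊆ W) :
    crossingEdges ends (F \ P) W = crossingEdges ends F W := by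
  ext e
  have hP : e ∈ P → ∀ j, ends e j ∈ W := fun he j ↦ hRW (h.ends_mem e he j)
  simp only [mem_crossingEdges, Finset.mem_sdiff]
  grind

theorem exists_mem_crossingEdges_forall_ends_notMem
    (h : (crossingEdges ends F W).card < (crossingEdges ends F (W ∪ R)).card) :
    ∃ e ∈ crossingEdges ends F R, ∀ j, ends e j ∉ W := by
  obtain ⟨e, he, heW⟩ := Finset.exists_mem_notMem_of_card_lt_card h
  simp only [mem_crossingEdges, Set.mem_union] at he heW
  refine ⟨e, mem_crossingEdges.2 ?_, Fin.forall_fin_two.2 ?_⟩ <;> grind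

/-- An edge leaving `R` that avoids a maximal tight set avoids all tight cuts, because by
submodularity tight sets are closed under union. -/
theorem IsSparingGrowth.exists_sparable_edge [Finite X] (h : IsSparingGrowth ends A B F k P R)
    (hF : ∀ W, IsSeparation A B W → k < (crossingEdges ends F W).card) (hBR : Disjoint B R) :
    ∃ e ∈ crossingEdges ends (F \ P) R, ∀ W, IsSeparation A B W →
      e ∈ crossingEdges ends (F \ P) W → k < (crossingEdges ends (F \ P) W).card := by
  have hR : IsSeparation A B R := ⟨h.subset_reached, hBR⟩
  let tight : Set (Set X) := {W | IsSeparation A B W ∧ (crossingEdges ends (F \ P) W).card = k}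
  have lt_card_of_notMem_tight {W} (hW : IsSeparation A B W) (hWt : W ∉ tight) :
      k < (crossingEdges ends (F \ P) W).card :=
    (h.le_card_sdiff W hW).lt_of_ne fun hk ↦ hWt ⟨hW, hk.symm⟩
  rcases tight.eq_empty_or_nonempty with hempty | hne
  · have hcard : 0 < (crossingEdges ends (F \ P) R).card := by
      rw [h.crossingEdges_sdiff subset_rfl]
      exact (hF R hR).pos
    obtain ⟨e, he⟩ := Finset.card_pos.1 hcard
    exact ⟨e, he, fun W hW _ ↦ lt_card_of_notMem_tight hW (hempty ▸ Set.notMem_empty W)⟩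
  · obtain ⟨M, ⟨hM, hMk⟩, hmax⟩ := tight.toFinite.exists_maximal hne
    have hgain : (crossingEdges ends (F \ P) M).card <
        (crossingEdges ends (F \ P) (M ∪ R)).card := by
      rw [hMk, h.crossingEdges_sdiff Set.subset_union_right]
      exact hF _ (hM.union hR)
    obtain ⟨e, heR, heM⟩ := exists_mem_crossingEdges_forall_ends_notMem hgain
    refine ⟨e, heR, fun W hW heW ↦ lt_card_of_notMem_tight hW fun ⟨_, hWk⟩ ↦ ?_⟩
    have hsubmod := card_crossingEdges_inter_add_card_crossingEdges_union_le ends (F \ P) M W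
    have hinter := h.le_card_sdiff _ (hM.inter hW)
    have hunion := h.le_card_sdiff _ (hM.union hW)
    have hWM : M ∪ W ⊆ M := hmax ⟨hM.union hW, by lia⟩ Set.subset_union_left
    have heW' : ∀ j, ends e j ∉ W := fun j hj ↦ heM j (hWM (Or.inr hj))
    exact (mem_crossingEdges.1 heW).2 (iff_of_false (heW' 0) (heW' 1))

theorem IsSparingGrowth.insert_edge (h : IsSparingGrowth ends A B F k P R)
    (heR : e ∈ crossingEdges ends (F \ P) R)
    (hspare : ∀ W, IsSeparation A B W →
      e ∈ crossingEdges ends (F \ P) W → k < (crossingEdges ends (F \ P) W).card) :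
    IsSparingGrowth ends A B F k (insert e P) (R ∪ Set.range (ends e)) := by
  obtain ⟨heFP, hcross⟩ := mem_crossingEdges.1 heR
  refine ⟨?_, h.subset_reached.trans Set.subset_union_left, ?_, fun W hA hRW ↦ ?_, fun W hW ↦ ?_⟩
  · exact Finset.insert_subset (Finset.mem_sdiff.1 heFP).1 h.subset_edges
  · simp only [Finset.forall_mem_insert]
    exact ⟨fun j ↦ Or.inr ⟨j, rfl⟩, fun f hf j ↦ Or.inl (h.ends_mem f hf j)⟩
  · by_cases hR : R ⊆ W
    · refine ⟨e, mem_crossingEdges.2 ⟨Finset.mem_insert_self e P, fun heW ↦ hRW ?_⟩⟩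
      have hends : ends e 0 ∈ W ∧ ends e 1 ∈ W := by grind
      exact Set.union_subset hR (Set.range_subset_iff.2 (Fin.forall_fin_two.2 hends))
    · exact (h.crossingEdges_nonempty W hA hR).mono
        (Finset.filter_subset_filter _ (Finset.subset_insert e P))
  · have herase : crossingEdges ends (F \ insert e P) W =
        (crossingEdges ends (F \ P) W).erase e := by
      rw [crossingEdges, Finset.sdiff_insert, Finset.filter_erase, crossingEdges]
    rw [herase]
    by_cases heW : e ∈ crossingEdges ends (F \ P) W
    · rw [Finset.card_erase_of_mem heW]
      exact Nat.le_sub_one_of_lt (hspare W hW heW)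
    · rw [Finset.erase_eq_of_notMem heW]
      exact h.le_card_sdiff W hW

theorem exists_separating_subset_sparing [Finite X]
    (hF : ∀ W, IsSeparation A B W → k < (crossingEdges ends F W).card) :
    ∃ P ⊆ F, (∀ W, IsSeparation A B W → (crossingEdges ends P W).Nonempty) ∧
      ∀ W, IsSeparation A B W → k ≤ (crossingEdges ends (F \ P) W).card := by
  obtain ⟨R, ⟨P, hPR⟩, hmax⟩ :=
    (Set.toFinite {R | ∃ P, IsSparingGrowth ends A B F k P R}).exists_maximal
      ⟨A, ∅, isSparingGrowth_empty fun W hW ↦ (hF W hW).le⟩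
  have hBR : ¬Disjoint B R := fun hBR ↦ by
    obtain ⟨e, heR, hspare⟩ := hPR.exists_sparable_edge hF hBR
    have hrange := Set.union_subset_iff.1 <|
      hmax ⟨insert e P, hPR.insert_edge heR hspare⟩ Set.subset_union_left
    exact (mem_crossingEdges.1 heR).2 (iff_of_true (hrange.2 ⟨0, rfl⟩) (hrange.2 ⟨1, rfl⟩))
  exact ⟨P, hPR.subset_edges, fun W hW ↦ hPR.crossingEdges_nonempty W hW.1
    fun hRW ↦ hBR (hW.2.mono_right hRW), hPR.le_card_sdiff⟩

/-- Edge form of Menger's theorem, with the disjoint paths relaxed to disjoint edge sets meeting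
every cut; edges that no such set needs may carry any label. -/
theorem exists_separating_labelling [Finite X]
    (hF : ∀ W, IsSeparation A B W → k ≤ (crossingEdges ends F W).card) :
    ∃ l : E → ℕ, ∀ i < k, ∀ W, IsSeparation A B W → ∃ e ∈ crossingEdges ends F W, l e = i := by
  induction k generalizing F with
  | zero => exact ⟨0, by simp⟩
  | succ k ih =>
    obtain ⟨P, hPF, hP, hrest⟩ := exists_separating_subset_sparing hF
    obtain ⟨l, hl⟩ := ih hrest
    refine ⟨fun e ↦ if e ∈ P then k else l e, fun i hi W hW ↦ ?_⟩
    rcases Nat.lt_succ_iff_lt_or_eq.1 hi with hik | rfl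
    · obtain ⟨e, he, hle⟩ := hl i hik W hW
      obtain ⟨heFP, hcross⟩ := mem_crossingEdges.1 he
      obtain ⟨heF, heP⟩ := Finset.mem_sdiff.1 heFP
      exact ⟨e, mem_crossingEdges.2 ⟨heF, hcross⟩, (if_neg heP).trans hle⟩
    · obtain ⟨e, he⟩ := hP W hW
      obtain ⟨heP, hcross⟩ := mem_crossingEdges.1 he
      exact ⟨e, mem_crossingEdges.2 ⟨hPF heP, hcross⟩, if_pos heP⟩

end Menger

theorem card_le_rank_of_submatrix_diagonal {K m n ι : Type*} [Field K] [Fintype n] [Fintype ι]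
    (M : Matrix m n K) (r : ι → m) (c : ι → n) (hdiag : ∀ i, M (r i) (c i) ≠ 0)
    (hoff : ∀ i j, i ≠ j → M (r i) (c j) = 0) : Fintype.card ι ≤ M.rank := by
  have hsub : M.submatrix r c = Matrix.diagonal fun i ↦ M (r i) (c i) := by
    ext i j
    by_cases hij : i = j
    · simp [hij]
    · simp [hij, hoff]
  calc Fintype.card ι = (M.submatrix r c).rank := by simp [hsub, Matrix.rank_diagonal, hdiag]
    _ ≤ M.rank := Matrix.rank_submatrix_le M r c

namespace TN

variable {N : TN} {ι : Type*} {l : N.E → ι} {d : ℕ}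

/-- The input open ends, as a set of nodes of the graph. -/
def inputs (N : TN) : Set (N.V ⊕ N.S ⊕ N.T) := Set.range (Sum.inr ∘ Sum.inl)

/-- The output open ends, as a set of nodes of the graph. -/
def outputs (N : TN) : Set (N.V ⊕ N.S ⊕ N.T) := Set.range (Sum.inr ∘ Sum.inr)

theorem isCutSet_crossingEdges {W : Set (N.V ⊕ N.S ⊕ N.T)}
    (hW : IsSeparation N.inputs N.outputs W) :
    N.IsCutSet (crossingEdges N.ends Finset.univ W) := by
  refine ⟨fun x ↦ decide (x ∉ W), fun u ↦ ?_, fun u ↦ ?_, fun e ↦ ?_⟩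
  · simpa using hW.1 ⟨u, rfl⟩
  · simpa using Set.disjoint_left.1 hW.2 ⟨u, rfl⟩
  · simp [mem_crossingEdges]

/-- The edges labelled `i` meet every cut between the inputs and the outputs. -/
def IsSeparatingLabel (l : N.E → ι) (i : ι) : Prop :=
  ∀ W, IsSeparation N.inputs N.outputs W → ∃ e ∈ crossingEdges N.ends Finset.univ W, l e = i

theorem exists_isSeparatingLabel {k : ℕ} (hk : ∀ C : Finset N.E, N.IsCutSet C → k ≤ C.card) :
    ∃ l : N.E → ℕ, ∀ i < k, IsSeparatingLabel l i :=
  exists_separating_labelling fun _ hW ↦ hk _ (isCutSet_crossingEdges hW)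

theorem eq_inEdge {e : N.E} {j : Fin 2} {u : N.S} (h : N.ends e j = Sum.inr (Sum.inl u)) :
    e = N.inEdge u :=
  congrArg Prod.fst ((N.openS u).choose_spec.2 (e, j) h)

theorem eq_outEdge {e : N.E} {j : Fin 2} {u : N.T} (h : N.ends e j = Sum.inr (Sum.inr u)) :
    e = N.outEdge u :=
  congrArg Prod.fst ((N.openT u).choose_spec.2 (e, j) h)

/-- An assignment of indices to the edges is consistent with the labelling `l` if equally labelled
legs of each internal vertex carry the same index. Indices are compared as natural numbers, since
the two edges may have different capacities. -/
def IsConsistent (l : N.E → ι) (W : (e : N.E) → Fin (N.c e)) : Prop :=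
  ∀ v, ∀ p q : N.Legs v, l p.1.1 = l q.1.1 → (W p.1.1 : ℕ) = W q.1.1

theorem IsConsistent.eq_of_ends_eq {W : (e : N.E) → Fin (N.c e)} (hW : IsConsistent l W)
    {e e' : N.E} {j j' : Fin 2} (hends : N.ends e j = N.ends e' j') (hl : l e = l e') :
    (W e : ℕ) = W e' := by
  rcases hx : N.ends e' j' with v | u | u
  · exact hW v ⟨(e, j), hends.trans hx⟩ ⟨(e', j'), hx⟩ hl
  · rw [eq_inEdge hx, eq_inEdge (hends.trans hx)]
  · rw [eq_outEdge hx, eq_outEdge (hends.trans hx)]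

/-- The nodes reached by edges of label `i` and index `a` would otherwise, together with the inputs,
form one side of a cut that no edge of label `i` crosses. -/
theorem IsSeparatingLabel.exists_outEdge {i : ι} (hi : IsSeparatingLabel l i)
    {W : (e : N.E) → Fin (N.c e)} (hW : IsConsistent l W) {a : ℕ}
    (hin : ∀ u, l (N.inEdge u) = i → (W (N.inEdge u) : ℕ) = a) :
    ∃ u, l (N.outEdge u) = i ∧ (W (N.outEdge u) : ℕ) = a := by
  by_contra! hout
  let side : Set (N.V ⊕ N.S ⊕ N.T) :=
    N.inputs ∪ {x | ∃ e j, N.ends e j = x ∧ l e = i ∧ (W e : ℕ) = a}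
  have hside : IsSeparation N.inputs N.outputs side := by
    refine ⟨Set.subset_union_left, Set.disjoint_left.2 ?_⟩
    rintro _ ⟨u, rfl⟩ (⟨u', hu'⟩ | ⟨e, j, hends, hle, hWe⟩)
    · simp at hu'
    · obtain rfl := eq_outEdge hends
      exact hout u hle hWe
  obtain ⟨e, he, hle⟩ := hi side hside
  have mem_side_iff (j : Fin 2) : N.ends e j ∈ side ↔ (W e : ℕ) = a := by
    refine ⟨?_, fun hWe ↦ Or.inr ⟨e, j, rfl, hle, hWe⟩⟩
    rintro (⟨u, hu⟩ | ⟨e', j', hends, hle', hWe'⟩)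
    · obtain rfl := eq_inEdge hu.symm
      exact hin u hle
    · exact (hW.eq_of_ends_eq hends.symm (hle.trans hle'.symm)).trans hWe'
  exact (mem_crossingEdges.1 he).2 ((mem_side_iff 0).trans (mem_side_iff 1).symm)

/-- The tensors that force equally labelled legs to carry equal indices. -/
noncomputable def labelTensors (l : N.E → ι) : N.Assignment :=
  fun _ idx ↦ if ∀ p q, l p.1.1 = l q.1.1 → (idx p : ℕ) = idx q then 1 else 0

theorem prod_labelTensors (W : (e : N.E) → Fin (N.c e)) :
    ∏ v, labelTensors l v (fun p ↦ W p.1.1) = if IsConsistent l W then 1 else 0 := by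
  simp only [labelTensors, Fintype.prod_boole, IsConsistent]
  congr

theorem β_labelTensors_ne_zero_iff {iT : N.OutIdx} {iS : N.InIdx} :
    N.β (labelTensors l) iT iS ≠ 0 ↔ ∃ W : (e : N.E) → Fin (N.c e), IsConsistent l W ∧
      (∀ u, W (N.inEdge u) = iS u) ∧ ∀ u, W (N.outEdge u) = iT u := by
  simp only [β, prod_labelTensors, ← ite_and, Finset.sum_boole, Nat.cast_ne_zero,
    Finset.card_ne_zero, Finset.filter_nonempty_iff, Finset.mem_univ, true_and]
  exact exists_congr fun W ↦ and_comm

/-- The edge indices obtained by giving every edge of label `i` the index `y i`. -/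
def labelIndices (l : N.E → ι) (hd : ∀ e, d ≤ N.c e) (y : ι → Fin d) (e : N.E) : Fin (N.c e) :=
  Fin.castLE (hd e) (y (l e))

theorem isConsistent_labelIndices (hd : ∀ e, d ≤ N.c e) (y : ι → Fin d) :
    IsConsistent l (labelIndices l hd y) :=
  fun _ _ _ hpq ↦ congrArg (fun i ↦ (y i : ℕ)) hpq

/-- The output multi-index read off from indices on all edges. -/
noncomputable def outIdx (W : (e : N.E) → Fin (N.c e)) : N.OutIdx := fun u ↦ W (N.outEdge u)

/-- The input multi-index read off from indices on all edges. -/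
noncomputable def inIdx (W : (e : N.E) → Fin (N.c e)) : N.InIdx := fun u ↦ W (N.inEdge u)

theorem IsSeparatingLabel.eq_of_β_ne_zero {i : ι} (hi : IsSeparatingLabel l i)
    (hd : ∀ e, d ≤ N.c e) {y z : ι → Fin d}
    (hne : N.β (labelTensors l) (outIdx (labelIndices l hd y)) (inIdx (labelIndices l hd z)) ≠ 0) :
    y i = z i := by
  obtain ⟨W, hW, hin, hout⟩ := β_labelTensors_ne_zero_iff.1 hne
  obtain ⟨u, hu, hWu⟩ := hi.exists_outEdge hW (a := z i) fun u hu ↦ by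
    rw [hin, inIdx, labelIndices, hu, Fin.val_castLE]
  rw [hout, outIdx, labelIndices, hu, Fin.val_castLE] at hWu
  exact Fin.ext hWu

theorem pow_card_le_rank_β_labelTensors [NeZero d] (hd : ∀ e, d ≤ N.c e) (J : Finset ι)
    (hJ : ∀ i ∈ J, IsSeparatingLabel l i) : d ^ J.card ≤ (N.β (labelTensors l)).rank := by
  let extend (x : J → Fin d) : ι → Fin d := Function.extend Subtype.val x 0
  let indices (x : J → Fin d) : (e : N.E) → Fin (N.c e) := labelIndices l hd (extend x)
  have hdiag (x : J → Fin d) :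
      N.β (labelTensors l) (outIdx (indices x)) (inIdx (indices x)) ≠ 0 :=
    β_labelTensors_ne_zero_iff.2
      ⟨indices x, isConsistent_labelIndices hd _, fun _ ↦ rfl, fun _ ↦ rfl⟩
  have hoff (x y : J → Fin d) (hxy : x ≠ y) :
      N.β (labelTensors l) (outIdx (indices x)) (inIdx (indices y)) = 0 := by
    by_contra hne
    refine hxy (funext fun i ↦ ?_)
    simpa only [extend, Subtype.val_injective.extend_apply] using
      (hJ i i.2).eq_of_β_ne_zero hd hne
  simpa using card_le_rank_of_submatrix_diagonal _ (fun x ↦ outIdx (indices x))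
    (fun x ↦ inIdx (indices x)) hdiag hoff

theorem rank_β_le_QMF (𝒯 : N.Assignment) : (N.β 𝒯).rank ≤ N.QMF := by
  refine le_csSup ⟨Fintype.card N.InIdx, ?_⟩ ⟨𝒯, rfl⟩
  rintro _ ⟨𝒯', rfl⟩
  exact Matrix.rank_le_card_width _

theorem pow_le_QMF [NeZero d] (hd : ∀ e, d ≤ N.c e) {k : ℕ}
    (hk : ∀ C : Finset N.E, N.IsCutSet C → k ≤ C.card) : d ^ k ≤ N.QMF := by
  obtain ⟨l, hl⟩ := exists_isSeparatingLabel hk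
  calc d ^ k = d ^ (Finset.range k).card := by rw [Finset.card_range]
    _ ≤ (N.β (labelTensors l)).rank :=
      pow_card_le_rank_β_labelTensors hd _ fun i hi ↦ hl i (Finset.mem_range.1 hi)
    _ ≤ N.QMF := rank_β_le_QMF _

end TN

/-- Lower bound on quantum capacity: if every edge capacity is at least `dmin` and the
classical min-cut (each edge counted with capacity 1) has cardinality `Ccard`, then
`QMF ≥ dmin ^ Ccard`. -/
theorem stmt_4 (N : TN) (dmin : ℕ) (hmin : ∀ e : N.E, dmin ≤ N.c e)
    (Ccard : ℕ)
    (hC : Ccard = sInf {m : ℕ | ∃ C : Finset N.E, N.IsCutSet C ∧ m = C.card}) :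
    dmin ^ Ccard ≤ N.QMF := by
  have hcut (C : Finset N.E) (hCut : N.IsCutSet C) : Ccard ≤ C.card :=
    hC ▸ Nat.sInf_le ⟨C, hCut, rfl⟩
  -- For `dmin = 0` and an empty cut the claim is `1 ≤ QMF`, which is the bound for capacity one.
  calc dmin ^ Ccard ≤ (max dmin 1) ^ Ccard := Nat.pow_le_pow_left (le_max_left dmin 1) Ccard
    _ ≤ N.QMF :=
      haveI : NeZero (max dmin 1) := ⟨by lia⟩
      TN.pow_le_QMF (fun e ↦ max_le (hmin e) (N.c_pos e)) hcut
end

section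
/- Let n ≥ 2 and 1 ≤ j, k < n. Suppose T₁ : ℂ² → ℂ² ⊗ ℂ² is the map |0⟩ ↦ |00⟩, |1⟩ ↦ |11⟩, and T₂ : ℂⁿ ⊗ ℂ² → ℂ^{2n−k}, T₃ : ℂ² ⊗ ℂⁿ → ℂ^{2n−j} are linear maps such that there exist linearly independent families {v₁,…,v_k}, {u₁,…,u_k} in ℂⁿ with T₂(v_i ⊗ |0⟩) = T₂(u_i ⊗ |1⟩) for all i, and linearly independent families {w₁,…,w_j}, {x₁,…,x_j} in ℂⁿ with T₃(|0⟩ ⊗ w_h) = T₃(|1⟩ ⊗ x_h) for all h. Then the composite linear map (T₂ ⊗ T₃) ∘ (Id_{ℂⁿ} ⊗ T₁ ⊗ Id_{ℂⁿ}) : ℂⁿ ⊗ ℂ² ⊗ ℂⁿ → ℂ^{2n−k} ⊗ ℂ^{2n−j} has rank at most 2n² − jk. -/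
open scoped TensorProduct

noncomputable section

set_option maxHeartbeats 1000000
set_option synthInstance.maxHeartbeats 200000

/-- `Id ⊗ (T₁ ⊗ Id) : ℂⁿ ⊗ (ℂ² ⊗ ℂⁿ) → ℂⁿ ⊗ ((ℂ² ⊗ ℂ²) ⊗ ℂⁿ)`. -/
def step0 (n : ℕ) (T₁ : (Fin 2 → ℂ) →ₗ[ℂ] (Fin 2 → ℂ) ⊗[ℂ] (Fin 2 → ℂ)) :
    (Fin n → ℂ) ⊗[ℂ] ((Fin 2 → ℂ) ⊗[ℂ] (Fin n → ℂ)) →ₗ[ℂ]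
      (Fin n → ℂ) ⊗[ℂ] (((Fin 2 → ℂ) ⊗[ℂ] (Fin 2 → ℂ)) ⊗[ℂ] (Fin n → ℂ)) :=
  TensorProduct.map LinearMap.id (TensorProduct.map T₁ LinearMap.id)

/-- Regrouping `ℂⁿ ⊗ ((ℂ² ⊗ ℂ²) ⊗ ℂⁿ) ≃ (ℂⁿ ⊗ ℂ²) ⊗ (ℂ² ⊗ ℂⁿ)`. -/
def regroup (n : ℕ) :
    (Fin n → ℂ) ⊗[ℂ] (((Fin 2 → ℂ) ⊗[ℂ] (Fin 2 → ℂ)) ⊗[ℂ] (Fin n → ℂ)) →ₗ[ℂ]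
      ((Fin n → ℂ) ⊗[ℂ] (Fin 2 → ℂ)) ⊗[ℂ] ((Fin 2 → ℂ) ⊗[ℂ] (Fin n → ℂ)) :=
  (TensorProduct.assoc ℂ (Fin n → ℂ) (Fin 2 → ℂ)
      ((Fin 2 → ℂ) ⊗[ℂ] (Fin n → ℂ))).symm.toLinearMap ∘ₗ
    TensorProduct.map LinearMap.id
      (TensorProduct.assoc ℂ (Fin 2 → ℂ) (Fin 2 → ℂ) (Fin n → ℂ)).toLinearMap

/-! If `T₁ e₀ = a₀ ⊗ b₀` and `T₁ e₁ = a₁ ⊗ b₁`, the composite sends `v ⊗ e₀ ⊗ w` to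
`T₂ (v ⊗ a₀) ⊗ T₃ (b₀ ⊗ w)` and `u ⊗ e₁ ⊗ x` to `T₂ (u ⊗ a₁) ⊗ T₃ (b₁ ⊗ x)`. For
`(v, u) = (vᵢ, uᵢ)` and `(w, x) = (wₕ, xₕ)` the two values agree, so the `jk` vectors
`vᵢ ⊗ e₀ ⊗ wₕ - uᵢ ⊗ e₁ ⊗ xₕ` lie in the kernel. Contracting the middle factor with a functional
that is `1` at `e₀` and `0` at `e₁` turns them into the independent family `vᵢ ⊗ wₕ`, so they are
independent, and rank-nullity gives the bound. -/

theorem finrank_range_add_card_le_of_linearIndependent_of_mem_ker {K V M ι : Type*}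
    [DivisionRing K] [AddCommGroup V] [Module K V] [FiniteDimensional K V]
    [AddCommGroup M] [Module K M] [Fintype ι] (f : V →ₗ[K] M) {z : ι → V}
    (hz : LinearIndependent K z) (hker : ∀ i, z i ∈ LinearMap.ker f) :
    Module.finrank K (LinearMap.range f) + Fintype.card ι ≤ Module.finrank K V := by
  have hz_ker : LinearIndependent K fun i ↦ (⟨z i, hker i⟩ : LinearMap.ker f) :=
    .of_comp (LinearMap.ker f).subtype hz
  calc Module.finrank K (LinearMap.range f) + Fintype.card ι
      ≤ Module.finrank K (LinearMap.range f) + Module.finrank K (LinearMap.ker f) := by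
        gcongr
        exact hz_ker.fintype_card_le_finrank
    _ = Module.finrank K V := f.finrank_range_add_finrank_ker

theorem exists_dual_eq_one_and_eq_zero {K S : Type*} [DivisionRing K] [AddCommGroup S] [Module K S]
    {e₀ e₁ : S} (he : e₀ ∉ Submodule.span K {e₁}) :
    ∃ φ : Module.Dual K S, φ e₀ = 1 ∧ φ e₁ = 0 := by
  obtain ⟨φ, hφ_span, hφ₀⟩ :=
    LinearMap.exists_extend_of_notMem (0 : Submodule.span K {e₁} →ₗ[K] K) he 1
  exact ⟨φ, hφ₀, LinearMap.congr_fun hφ_span ⟨e₁, Submodule.mem_span_singleton_self e₁⟩⟩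

section CommSemiring

variable {R V W S S₁ S₂ M N : Type*} [CommSemiring R]
  [AddCommMonoid V] [Module R V] [AddCommMonoid W] [Module R W]
  [AddCommMonoid S] [Module R S] [AddCommMonoid S₁] [Module R S₁] [AddCommMonoid S₂] [Module R S₂]
  [AddCommMonoid M] [Module R M] [AddCommMonoid N] [Module R N]

/-- The composite `(T₂ ⊗ T₃) ∘ (Id ⊗ T₁ ⊗ Id) : V ⊗ S ⊗ W → M ⊗ N`: the map `T₁` splits the middle
factor, and `T₂`, `T₃` absorb its two halves. The tensor factors are bracketed as in `step0` and
`regroup`. -/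
def tensorChain (T₁ : S →ₗ[R] S₁ ⊗[R] S₂) (T₂ : V ⊗[R] S₁ →ₗ[R] M) (T₃ : S₂ ⊗[R] W →ₗ[R] N) :
    V ⊗[R] (S ⊗[R] W) →ₗ[R] M ⊗[R] N :=
  TensorProduct.map T₂ T₃ ∘ₗ
    ((TensorProduct.assoc R V S₁ (S₂ ⊗[R] W)).symm.toLinearMap ∘ₗ
      (TensorProduct.assoc R S₁ S₂ W).toLinearMap.lTensor V) ∘ₗ
    (T₁.rTensor W).lTensor V

theorem tensorChain_tmul_of_eq_tmul {T₁ : S →ₗ[R] S₁ ⊗[R] S₂} (T₂ : V ⊗[R] S₁ →ₗ[R] M)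
    (T₃ : S₂ ⊗[R] W →ₗ[R] N) {e : S} {a : S₁} {b : S₂} (he : T₁ e = a ⊗ₜ b) (v : V) (w : W) :
    tensorChain T₁ T₂ T₃ (v ⊗ₜ (e ⊗ₜ w)) = T₂ (v ⊗ₜ a) ⊗ₜ T₃ (b ⊗ₜ w) := by
  simp [tensorChain, he]

variable (V W) in
/-- Contraction of the middle factor of `V ⊗ S ⊗ W` with a functional on `S`, which separates
tensors according to their component in `S`. -/
def contractMiddle (φ : Module.Dual R S) : V ⊗[R] (S ⊗[R] W) →ₗ[R] V ⊗[R] W :=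
  ((TensorProduct.lid R W).toLinearMap ∘ₗ φ.rTensor W).lTensor V

theorem contractMiddle_tmul (φ : Module.Dual R S) (v : V) (e : S) (w : W) :
    contractMiddle V W φ (v ⊗ₜ (e ⊗ₜ w)) = φ e • v ⊗ₜ[R] w := by
  simp [contractMiddle]

end CommSemiring

section CommRing

variable {R V W S S₁ S₂ M N ι κ : Type*} [CommRing R]
  [AddCommGroup V] [Module R V] [AddCommGroup W] [Module R W] [AddCommGroup S] [Module R S]
  [AddCommGroup S₁] [Module R S₁] [AddCommGroup S₂] [Module R S₂]
  [AddCommGroup M] [Module R M] [AddCommGroup N] [Module R N]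

theorem tmul_sub_tmul_mem_ker_tensorChain {T₁ : S →ₗ[R] S₁ ⊗[R] S₂} {T₂ : V ⊗[R] S₁ →ₗ[R] M}
    {T₃ : S₂ ⊗[R] W →ₗ[R] N} {e₀ e₁ : S} {a₀ a₁ : S₁} {b₀ b₁ : S₂}
    (he₀ : T₁ e₀ = a₀ ⊗ₜ b₀) (he₁ : T₁ e₁ = a₁ ⊗ₜ b₁) {v u : V} {w x : W}
    (hvu : T₂ (v ⊗ₜ a₀) = T₂ (u ⊗ₜ a₁)) (hwx : T₃ (b₀ ⊗ₜ w) = T₃ (b₁ ⊗ₜ x)) :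
    v ⊗ₜ (e₀ ⊗ₜ w) - u ⊗ₜ (e₁ ⊗ₜ x) ∈ LinearMap.ker (tensorChain T₁ T₂ T₃) := by
  rw [LinearMap.sub_mem_ker_iff, tensorChain_tmul_of_eq_tmul T₂ T₃ he₀,
    tensorChain_tmul_of_eq_tmul T₂ T₃ he₁, hvu, hwx]

theorem linearIndependent_tmul_sub_tmul [IsDomain R] {φ : Module.Dual R S} {e₀ e₁ : S}
    (hφ₀ : φ e₀ = 1) (hφ₁ : φ e₁ = 0) {v : ι → V} {w : κ → W}
    (hv : LinearIndependent R v) (hw : LinearIndependent R w) (u : ι → V) (x : κ → W) :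
    LinearIndependent R fun p : ι × κ ↦
      v p.1 ⊗ₜ[R] (e₀ ⊗ₜ[R] w p.2) - u p.1 ⊗ₜ[R] (e₁ ⊗ₜ[R] x p.2) := by
  refine .of_comp (contractMiddle V W φ) ?_
  simpa [Function.comp_def, contractMiddle_tmul, hφ₀, hφ₁] using hv.tmul_of_isDomain hw

end CommRing

theorem tensorChain_eq_map_comp_regroup_comp_step0 {M N : Type*} [AddCommMonoid M] [Module ℂ M]
    [AddCommMonoid N] [Module ℂ N] (n : ℕ)
    (T₁ : (Fin 2 → ℂ) →ₗ[ℂ] (Fin 2 → ℂ) ⊗[ℂ] (Fin 2 → ℂ))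
    (T₂ : (Fin n → ℂ) ⊗[ℂ] (Fin 2 → ℂ) →ₗ[ℂ] M) (T₃ : (Fin 2 → ℂ) ⊗[ℂ] (Fin n → ℂ) →ₗ[ℂ] N) :
    tensorChain T₁ T₂ T₃ = TensorProduct.map T₂ T₃ ∘ₗ (regroup n ∘ₗ step0 n T₁) :=
  rfl

theorem single_one_notMem_span_single_one {R ι : Type*} [Semiring R] [Nontrivial R]
    [DecidableEq ι] {i j : ι} (hij : i ≠ j) :
    (Pi.single i 1 : ι → R) ∉ Submodule.span R {Pi.single j 1} := by
  rw [Submodule.mem_span_singleton]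
  rintro ⟨c, hc⟩
  simpa [hij] using congrFun hc i

theorem stmt_7_general {K V W S S₁ S₂ M N ι κ : Type*} [Field K]
    [AddCommGroup V] [Module K V] [FiniteDimensional K V]
    [AddCommGroup W] [Module K W] [FiniteDimensional K W]
    [AddCommGroup S] [Module K S] [FiniteDimensional K S]
    [AddCommGroup S₁] [Module K S₁] [AddCommGroup S₂] [Module K S₂]
    [AddCommGroup M] [Module K M] [AddCommGroup N] [Module K N] [Fintype ι] [Fintype κ]
    {T₁ : S →ₗ[K] S₁ ⊗[K] S₂} {T₂ : V ⊗[K] S₁ →ₗ[K] M} {T₃ : S₂ ⊗[K] W →ₗ[K] N}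
    {e₀ e₁ : S} (he : e₀ ∉ Submodule.span K {e₁}) {a₀ a₁ : S₁} {b₀ b₁ : S₂}
    (he₀ : T₁ e₀ = a₀ ⊗ₜ b₀) (he₁ : T₁ e₁ = a₁ ⊗ₜ b₁)
    {v u : ι → V} (hv : LinearIndependent K v) (hvu : ∀ i, T₂ (v i ⊗ₜ a₀) = T₂ (u i ⊗ₜ a₁))
    {w x : κ → W} (hw : LinearIndependent K w) (hwx : ∀ h, T₃ (b₀ ⊗ₜ w h) = T₃ (b₁ ⊗ₜ x h)) :
    Module.finrank K (LinearMap.range (tensorChain T₁ T₂ T₃)) + Fintype.card ι * Fintype.card κ ≤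
      Module.finrank K V * (Module.finrank K S * Module.finrank K W) := by
  obtain ⟨φ, hφ₀, hφ₁⟩ := exists_dual_eq_one_and_eq_zero he
  have hrank := finrank_range_add_card_le_of_linearIndependent_of_mem_ker (tensorChain T₁ T₂ T₃)
    (linearIndependent_tmul_sub_tmul hφ₀ hφ₁ hv hw u x)
    fun p ↦ tmul_sub_tmul_mem_ker_tensorChain he₀ he₁ (hvu p.1) (hwx p.2)
  simpa only [Fintype.card_prod, Module.finrank_tensorProduct] using hrank

/-- If `T₁` is the copy map `|i⟩ ↦ |ii⟩` on `ℂ²`, and `T₂ : ℂⁿ ⊗ ℂ² → ℂ^{2n−k}`,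
`T₃ : ℂ² ⊗ ℂⁿ → ℂ^{2n−j}` identify the images of linearly independent `k`- resp. `j`-families
as stated, then `(T₂ ⊗ T₃) ∘ (Id ⊗ T₁ ⊗ Id)` has rank at most `2n² − jk`. -/
theorem stmt_7 (n j k : ℕ) (hn : 2 ≤ n) (hj1 : 1 ≤ j) (hjn : j < n) (hk1 : 1 ≤ k) (hkn : k < n)
    (T₁ : (Fin 2 → ℂ) →ₗ[ℂ] (Fin 2 → ℂ) ⊗[ℂ] (Fin 2 → ℂ))
    (hT₁ : ∀ i : Fin 2, T₁ (Pi.single i 1) =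
      (Pi.single i 1 : Fin 2 → ℂ) ⊗ₜ[ℂ] (Pi.single i 1 : Fin 2 → ℂ))
    (T₂ : (Fin n → ℂ) ⊗[ℂ] (Fin 2 → ℂ) →ₗ[ℂ] (Fin (2 * n - k) → ℂ))
    (T₃ : (Fin 2 → ℂ) ⊗[ℂ] (Fin n → ℂ) →ₗ[ℂ] (Fin (2 * n - j) → ℂ))
    (v u : Fin k → (Fin n → ℂ)) (hv : LinearIndependent ℂ v) (hu : LinearIndependent ℂ u)
    (hvu : ∀ i, T₂ (v i ⊗ₜ[ℂ] (Pi.single 0 1 : Fin 2 → ℂ))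
      = T₂ (u i ⊗ₜ[ℂ] (Pi.single 1 1 : Fin 2 → ℂ)))
    (w x : Fin j → (Fin n → ℂ)) (hw : LinearIndependent ℂ w) (hx : LinearIndependent ℂ x)
    (hwx : ∀ h, T₃ ((Pi.single 0 1 : Fin 2 → ℂ) ⊗ₜ[ℂ] w h)
      = T₃ ((Pi.single 1 1 : Fin 2 → ℂ) ⊗ₜ[ℂ] x h)) :
    Module.finrank ℂ
        ↥(LinearMap.range (TensorProduct.map T₂ T₃ ∘ₗ (regroup n ∘ₗ step0 n T₁)))
      ≤ 2 * n ^ 2 - j * k := by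
  rw [← tensorChain_eq_map_comp_regroup_comp_step0, pow_two, mul_comm j k]
  apply Nat.le_sub_of_add_le
  simpa only [Fintype.card_fin, Module.finrank_fin_fun, mul_left_comm n 2 n] using
    stmt_7_general (single_one_notMem_span_single_one zero_ne_one) (hT₁ 0) (hT₁ 1) hv hvu hw hwx

end
end

section
/- For the tensor network with three input edges of capacities 2, 2, 2, two internal edges of capacity 2 connecting a central trivalent vertex to two output vertices, and two output edges of capacities 3 and 3 (as in Figure 'maximal rank = 7'), the quantum min-cut is 8 but the quantum max-flow is at most 7; hence QMF < QMC. -/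
open scoped TensorProduct

noncomputable section

/-- `Id ⊗ (T₁ ⊗ Id) : ℂ² ⊗ (ℂ² ⊗ ℂ²) → ℂ² ⊗ ((ℂ² ⊗ ℂ²) ⊗ ℂ²)`. -/
def middle (T₁ : (Fin 2 → ℂ) →ₗ[ℂ] (Fin 2 → ℂ) ⊗[ℂ] (Fin 2 → ℂ)) :
    (Fin 2 → ℂ) ⊗[ℂ] ((Fin 2 → ℂ) ⊗[ℂ] (Fin 2 → ℂ)) →ₗ[ℂ]
      (Fin 2 → ℂ) ⊗[ℂ] (((Fin 2 → ℂ) ⊗[ℂ] (Fin 2 → ℂ)) ⊗[ℂ] (Fin 2 → ℂ)) :=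
  TensorProduct.map LinearMap.id (TensorProduct.map T₁ LinearMap.id)

/-- Regrouping `ℂ² ⊗ ((ℂ² ⊗ ℂ²) ⊗ ℂ²) ≃ (ℂ² ⊗ ℂ²) ⊗ (ℂ² ⊗ ℂ²)`. -/
def regroup' :
    (Fin 2 → ℂ) ⊗[ℂ] (((Fin 2 → ℂ) ⊗[ℂ] (Fin 2 → ℂ)) ⊗[ℂ] (Fin 2 → ℂ)) →ₗ[ℂ]
      ((Fin 2 → ℂ) ⊗[ℂ] (Fin 2 → ℂ)) ⊗[ℂ] ((Fin 2 → ℂ) ⊗[ℂ] (Fin 2 → ℂ)) :=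
  (TensorProduct.assoc ℂ (Fin 2 → ℂ) (Fin 2 → ℂ)
      ((Fin 2 → ℂ) ⊗[ℂ] (Fin 2 → ℂ))).symm.toLinearMap ∘ₗ
    TensorProduct.map LinearMap.id
      (TensorProduct.assoc ℂ (Fin 2 → ℂ) (Fin 2 → ℂ) (Fin 2 → ℂ)).toLinearMap

/-- The contracted map of the network of Figure "maximal rank = 7":
`(T₂ ⊗ T₃) ∘ (Id ⊗ T₁ ⊗ Id) : ℂ² ⊗ ℂ² ⊗ ℂ² → ℂ³ ⊗ ℂ³`. -/
def network (T₁ : (Fin 2 → ℂ) →ₗ[ℂ] (Fin 2 → ℂ) ⊗[ℂ] (Fin 2 → ℂ))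
    (T₂ T₃ : (Fin 2 → ℂ) ⊗[ℂ] (Fin 2 → ℂ) →ₗ[ℂ] (Fin 3 → ℂ)) :
    (Fin 2 → ℂ) ⊗[ℂ] ((Fin 2 → ℂ) ⊗[ℂ] (Fin 2 → ℂ)) →ₗ[ℂ]
      (Fin 3 → ℂ) ⊗[ℂ] (Fin 3 → ℂ) :=
  TensorProduct.map T₂ T₃ ∘ₗ (regroup' ∘ₗ middle T₁)

/-!
Write the network as `T₁ : B → X ⊗ Y`, `T₂ : A ⊗ X → P` and `T₃ : Y ⊗ C → Q`. Since `4 > 3`, there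
are `u ≠ 0` killed by `T₂` and `v ≠ 0` killed by `T₃`.

If `u = α ⊗ e` is pure, then `T₂ (α ⊗ ·)` has rank at most `1`, so the contracted map sends the
four-dimensional space `α ⊗ B ⊗ C` into a space of dimension at most `1 * 3`. The case of a pure `v`
is the mirror image.

Otherwise `u = ∑ aᵢ ⊗ xᵢ` and `v = ∑ yⱼ ⊗ cⱼ` for suitable bases. In these bases, functionals on
the two outputs become traceless `2 × 2` matrices `G` and `H`, and with `M₀, M₁` the matrices of
`T₁ b₀, T₁ b₁` the identity `tr (adj M₁ · G M₀ H) = tr (adj M₀ · G M₁ H)` exhibits a kernel vector.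
It holds because `adj` is a trace-preserving anti-involution with `adj G = -G` and `adj H = -H`.

Rank `7` is attained by `bₖ ↦ xₖ ⊗ yₖ` and the multiplication of binary linear forms: the monomials
`(i + k, k + j)` with `i, j, k ∈ {0, 1}` are all of `{0, 1, 2}²` except `(0, 2)` and `(2, 0)`.
-/

open Module Matrix

section TwoByTwo

variable {R : Type*} [CommRing R]

lemma trace_adjugate_fin_two (M : Matrix (Fin 2) (Fin 2) R) : M.adjugate.trace = M.trace := by
  simp [adjugate_fin_two, trace_fin_two, add_comm]

lemma adjugate_adjugate_fin_two (M : Matrix (Fin 2) (Fin 2) R) : M.adjugate.adjugate = M := by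
  simp [adjugate_adjugate']

lemma adjugate_eq_neg_of_trace_eq_zero {G : Matrix (Fin 2) (Fin 2) R} (hG : G.trace = 0) :
    G.adjugate = -G := by
  have h : G 1 1 = -G 0 0 := eq_neg_of_add_eq_zero_right (G.trace_fin_two ▸ hG)
  ext i j
  fin_cases i <;> fin_cases j <;> simp [adjugate_fin_two, h]

lemma adjugate_fin_two_eq_zero_iff {M : Matrix (Fin 2) (Fin 2) R} : M.adjugate = 0 ↔ M = 0 := by
  refine ⟨fun h => ?_, fun h => by simp [h]⟩
  rw [← adjugate_adjugate_fin_two M, h, adjugate_zero]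

lemma trace_adjugate_mul_eq_of_trace_eq_zero {G H : Matrix (Fin 2) (Fin 2) R}
    (hG : G.trace = 0) (hH : H.trace = 0) (M N : Matrix (Fin 2) (Fin 2) R) :
    (M.adjugate * (G * N * H)).trace = (N.adjugate * (G * M * H)).trace := by
  calc (M.adjugate * (G * N * H)).trace
      = (M.adjugate * (G * N * H)).adjugate.trace := (trace_adjugate_fin_two _).symm
    _ = (H * (N.adjugate * (G * M))).trace := by
        simp [adjugate_mul_distrib, adjugate_eq_neg_of_trace_eq_zero hG,
          adjugate_eq_neg_of_trace_eq_zero hH, adjugate_adjugate_fin_two,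
          mul_assoc]
    _ = (N.adjugate * (G * M * H)).trace := by rw [trace_mul_comm]; simp only [mul_assoc]

end TwoByTwo

section Contraction

variable {R A B C X Y P Q : Type*} [CommRing R]
  [AddCommGroup A] [Module R A] [AddCommGroup B] [Module R B] [AddCommGroup C] [Module R C]
  [AddCommGroup X] [Module R X] [AddCommGroup Y] [Module R Y]
  [AddCommGroup P] [Module R P] [AddCommGroup Q] [Module R Q]

/-- The contraction `(T₂ ⊗ T₃) ∘ (Id ⊗ T₁ ⊗ Id)` of the network with inputs `A`, `B`, `C`, internal
edges `X`, `Y` and outputs `P`, `Q`; it unfolds to `network` on the spaces used there. -/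
def contractedMap (T₁ : B →ₗ[R] X ⊗[R] Y) (T₂ : A ⊗[R] X →ₗ[R] P) (T₃ : Y ⊗[R] C →ₗ[R] Q) :
    A ⊗[R] (B ⊗[R] C) →ₗ[R] P ⊗[R] Q :=
  TensorProduct.map T₂ T₃ ∘ₗ
    (((TensorProduct.assoc R A X (Y ⊗[R] C)).symm.toLinearMap ∘ₗ
      TensorProduct.map LinearMap.id (TensorProduct.assoc R X Y C).toLinearMap) ∘ₗ
    TensorProduct.map LinearMap.id (TensorProduct.map T₁ LinearMap.id))

variable (T₁ : B →ₗ[R] X ⊗[R] Y) (T₂ : A ⊗[R] X →ₗ[R] P) (T₃ : Y ⊗[R] C →ₗ[R] Q)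

lemma contractedMap_tmul (a : A) (b : B) (c : C) :
    contractedMap T₁ T₂ T₃ (a ⊗ₜ (b ⊗ₜ c)) =
      TensorProduct.map (T₂ ∘ₗ TensorProduct.mk R A X a)
        (T₃ ∘ₗ (TensorProduct.mk R Y C).flip c) (T₁ b) := by
  simp only [contractedMap, LinearMap.comp_apply, TensorProduct.map_tmul, LinearMap.id_apply]
  induction T₁ b with
  | zero => simp
  | tmul x y => simp
  | add s t hs ht => simp only [TensorProduct.add_tmul, TensorProduct.tmul_add, map_add, hs, ht]

lemma contractedMap_comp_mk (a : A) :
    contractedMap T₁ T₂ T₃ ∘ₗ TensorProduct.mk R A (B ⊗[R] C) a =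
      TensorProduct.map (T₂ ∘ₗ TensorProduct.mk R A X a) T₃ ∘ₗ
        (TensorProduct.assoc R X Y C).toLinearMap ∘ₗ T₁.rTensor C := by
  ext b c
  simp only [TensorProduct.AlgebraTensorModule.curry_apply, TensorProduct.curry_apply,
    LinearMap.coe_restrictScalars, LinearMap.comp_apply, TensorProduct.mk_apply,
    contractedMap_tmul, LinearMap.rTensor_tmul, LinearEquiv.coe_coe]
  induction T₁ b with
  | zero => simp
  | tmul x y => simp
  | add s t hs ht => simp only [TensorProduct.add_tmul, map_add, hs, ht]

variable (A B C) in
/-- The reversal `A ⊗ (B ⊗ C) ≃ C ⊗ (B ⊗ A)` of the three inputs of the network. -/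
def reverseInputs : A ⊗[R] (B ⊗[R] C) ≃ₗ[R] C ⊗[R] (B ⊗[R] A) :=
  TensorProduct.comm R A (B ⊗[R] C) ≪≫ₗ
    (TensorProduct.comm R B C).rTensor A ≪≫ₗ TensorProduct.assoc R C B A

lemma comm_comp_contractedMap :
    (TensorProduct.comm R P Q).toLinearMap ∘ₗ contractedMap T₁ T₂ T₃ =
      contractedMap ((TensorProduct.comm R X Y).toLinearMap ∘ₗ T₁)
          (T₃ ∘ₗ (TensorProduct.comm R C Y).toLinearMap)
          (T₂ ∘ₗ (TensorProduct.comm R X A).toLinearMap) ∘ₗ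
        (reverseInputs A B C).toLinearMap := by
  ext a b c
  simp only [TensorProduct.AlgebraTensorModule.curry_apply, LinearMap.restrictScalars_self,
    TensorProduct.curry_apply, LinearMap.comp_apply, LinearEquiv.coe_coe, contractedMap_tmul,
    reverseInputs, LinearEquiv.trans_apply, TensorProduct.comm_tmul, LinearEquiv.rTensor_tmul,
    TensorProduct.assoc_tmul, TensorProduct.map_comm]
  rfl

lemma injective_contractedMap_reverse_iff :
    Function.Injective (contractedMap ((TensorProduct.comm R X Y).toLinearMap ∘ₗ T₁)
        (T₃ ∘ₗ (TensorProduct.comm R C Y).toLinearMap)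
        (T₂ ∘ₗ (TensorProduct.comm R X A).toLinearMap)) ↔
      Function.Injective (contractedMap T₁ T₂ T₃) := by
  rw [← (TensorProduct.comm R P Q).injective.of_comp_iff (contractedMap T₁ T₂ T₃),
    ← Function.Injective.of_comp_iff' _ (reverseInputs A B C).bijective]
  exact iff_of_eq (congrArg (fun f : _ →ₗ[R] _ => Function.Injective f)
    (comm_comp_contractedMap T₁ T₂ T₃).symm)

end Contraction

section Pairing

variable {R A B C X Y P Q ι κ μ ν : Type*} [CommRing R]
  [AddCommGroup A] [Module R A] [AddCommGroup B] [Module R B] [AddCommGroup C] [Module R C]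
  [AddCommGroup X] [Module R X] [AddCommGroup Y] [Module R Y]
  [AddCommGroup P] [Module R P] [AddCommGroup Q] [Module R Q]

open TensorProduct in
lemma eq_zero_of_forall_dualDistrib_tmul_eq_zero [Free R P] [Free R Q] {z : P ⊗[R] Q}
    (h : ∀ φ ψ, dualDistrib R P Q (φ ⊗ₜ ψ) z = 0) : z = 0 := by
  let p := Free.chooseBasis R P
  let q := Free.chooseBasis R Q
  have repr_eq (i j) :
      (p.tensorProduct q).coord (i, j) = dualDistrib R P Q (p.coord i ⊗ₜ q.coord j) := by
    ext; simp [mul_comm]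
  refine (p.tensorProduct q).forall_coord_eq_zero_iff.1 fun ⟨i, j⟩ => ?_
  rw [repr_eq, h]

/-- The coefficients `M` in `t = ∑ M k l • x k ⊗ y l`. -/
def tensorMatrix [Finite μ] [Finite ν] (x : Basis μ R X) (y : Basis ν R Y) :
    X ⊗[R] Y ≃ₗ[R] Matrix μ ν R :=
  (x.tensorProduct y).equivFun ≪≫ₗ LinearEquiv.curry R R μ ν ≪≫ₗ ofLinearEquiv R

/-- The values of a functional on `A ⊗ X` at the tensors `a i ⊗ x k`. -/
def dualMatrix (a : ι → A) (x : κ → X) (φ : Dual R (A ⊗[R] X)) : Matrix ι κ R :=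
  of fun i k => φ (a i ⊗ₜ x k)

/-- The tensor with middle factor `b` and coefficients `W` on the outer factors. The indices of `W`
are transposed so that pairing with it becomes a trace. -/
def matrixTensor [Fintype ι] [Fintype κ] (a : ι → A) (c : κ → C) (W : Matrix κ ι R) (b : B) :
    A ⊗[R] (B ⊗[R] C) :=
  ∑ i, ∑ j, W j i • a i ⊗ₜ (b ⊗ₜ c j)

lemma sum_tensorMatrix_smul [Fintype μ] [Fintype ν] (x : Basis μ R X) (y : Basis ν R Y)
    (t : X ⊗[R] Y) : ∑ k, ∑ l, tensorMatrix x y t k l • x k ⊗ₜ[R] y l = t := by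
  conv_rhs => rw [← (x.tensorProduct y).sum_equivFun t, Fintype.sum_prod_type]
  simp [tensorMatrix]

lemma trace_dualMatrix [Fintype ι] (a : ι → A) (x : ι → X) (φ : Dual R (A ⊗[R] X)) :
    (dualMatrix a x φ).trace = φ (∑ i, a i ⊗ₜ x i) := by
  simp [dualMatrix, trace]

variable (T₁ : B →ₗ[R] X ⊗[R] Y) (T₂ : A ⊗[R] X →ₗ[R] P) (T₃ : Y ⊗[R] C →ₗ[R] Q)

lemma dualDistrib_contractedMap_tmul [Fintype μ] [Fintype ν] (a : ι → A) (c : κ → C)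
    (x : Basis μ R X) (y : Basis ν R Y) (φ : Dual R P) (ψ : Dual R Q) (i : ι) (b : B) (j : κ) :
    TensorProduct.dualDistrib R P Q (φ ⊗ₜ ψ) (contractedMap T₁ T₂ T₃ (a i ⊗ₜ (b ⊗ₜ c j))) =
      (dualMatrix a x (φ ∘ₗ T₂) * tensorMatrix x y (T₁ b) * dualMatrix y c (ψ ∘ₗ T₃)) i j := by
  rw [contractedMap_tmul]
  conv_lhs => rw [← sum_tensorMatrix_smul x y (T₁ b)]
  simp only [map_sum, map_smul, TensorProduct.map_tmul, TensorProduct.dualDistrib_apply, mul_apply,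
    dualMatrix, of_apply, LinearMap.comp_apply, TensorProduct.mk_apply, LinearMap.flip_apply,
    smul_eq_mul, Finset.sum_mul]
  rw [Finset.sum_comm]
  exact Finset.sum_congr rfl fun l _ => Finset.sum_congr rfl fun k _ => by ring

lemma dualDistrib_contractedMap_matrixTensor [Fintype ι] [Fintype κ] [Fintype μ] [Fintype ν]
    (a : ι → A) (c : κ → C) (x : Basis μ R X) (y : Basis ν R Y) (φ : Dual R P) (ψ : Dual R Q)
    (W : Matrix κ ι R) (b : B) :
    TensorProduct.dualDistrib R P Q (φ ⊗ₜ ψ)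
        (contractedMap T₁ T₂ T₃ (matrixTensor a c W b)) =
      (W * (dualMatrix a x (φ ∘ₗ T₂) * tensorMatrix x y (T₁ b) *
        dualMatrix y c (ψ ∘ₗ T₃))).trace := by
  simp only [matrixTensor, map_sum, map_smul, dualDistrib_contractedMap_tmul T₁ T₂ T₃ a c x y,
    trace, diag_apply, Matrix.mul_apply (M := W), smul_eq_mul]
  exact Finset.sum_comm

lemma eq_zero_of_matrixTensor_sub_eq_zero [Fintype ι] [Fintype κ] (a : Basis ι R A)
    (b : Basis (Fin 2) R B) (c : Basis κ R C) {V W : Matrix κ ι R}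
    (h : matrixTensor a c V (b 0) - matrixTensor a c W (b 1) = 0) : V = 0 ∧ W = 0 := by
  classical
  have coord_eq (i : ι) (k : Fin 2) (j : κ) :
      V j i * Finsupp.single 0 1 k - W j i * Finsupp.single 1 1 k = 0 := by
    have := congrArg ((a.tensorProduct (b.tensorProduct c)).coord (i, k, j)) h
    simpa [matrixTensor, Finsupp.single_apply] using this
  exact ⟨by ext j i; simpa using coord_eq i 0 j, by ext j i; simpa using coord_eq i 1 j⟩

lemma not_injective_contractedMap_of_map_sum_tmul_eq_zero [Nontrivial R] [Free R P] [Free R Q]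
    (a : Basis (Fin 2) R A) (b : Basis (Fin 2) R B) (c : Basis (Fin 2) R C)
    (x : Basis (Fin 2) R X) (y : Basis (Fin 2) R Y)
    (hT₂ : T₂ (∑ i, a i ⊗ₜ x i) = 0) (hT₃ : T₃ (∑ j, y j ⊗ₜ c j) = 0) :
    ¬ Function.Injective (contractedMap T₁ T₂ T₃) := by
  intro hinj
  let M (k : Fin 2) := tensorMatrix x y (T₁ (b k))
  let w := matrixTensor a c (M 1).adjugate (b 0) - matrixTensor a c (M 0).adjugate (b 1)
  have hw : contractedMap T₁ T₂ T₃ w = 0 := by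
    refine eq_zero_of_forall_dualDistrib_tmul_eq_zero fun φ ψ => ?_
    have hG : (dualMatrix a x (φ ∘ₗ T₂)).trace = 0 := by
      rw [trace_dualMatrix, LinearMap.comp_apply, hT₂, map_zero]
    have hH : (dualMatrix y c (ψ ∘ₗ T₃)).trace = 0 := by
      rw [trace_dualMatrix, LinearMap.comp_apply, hT₃, map_zero]
    simp only [w, map_sub, dualDistrib_contractedMap_matrixTensor T₁ T₂ T₃ a c x y]
    exact sub_eq_zero.2 (trace_adjugate_mul_eq_of_trace_eq_zero hG hH _ _)
  have ⟨hM₁, hM₀⟩ := eq_zero_of_matrixTensor_sub_eq_zero a b c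
    ((injective_iff_map_eq_zero _).1 hinj w hw)
  rw [adjugate_fin_two_eq_zero_iff, LinearEquiv.map_eq_zero_iff] at hM₀ hM₁
  have hT₁ : T₁ = 0 := b.ext fun k => by fin_cases k <;> simp [hM₀, hM₁]
  have : a 0 ⊗ₜ[R] (b 0 ⊗ₜ[R] c 0) = 0 := hinj (by simp [contractedMap_tmul, hT₁])
  exact (a.tensorProduct (b.tensorProduct c)).ne_zero (0, 0, 0) (by simpa using this)

end Pairing

section Rank

variable {K A B C X Y P Q V W ι κ : Type*} [Field K]
  [AddCommGroup A] [Module K A] [AddCommGroup B] [Module K B] [AddCommGroup C] [Module K C]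
  [AddCommGroup X] [Module K X] [AddCommGroup Y] [Module K Y]
  [AddCommGroup P] [Module K P] [AddCommGroup Q] [Module K Q]
  [AddCommGroup V] [Module K V] [AddCommGroup W] [Module K W]

lemma tmul_ne_zero_of_ne_zero {v : V} {w : W} (hv : v ≠ 0) (hw : w ≠ 0) : v ⊗ₜ[K] w ≠ 0 :=
  ((LinearIndependent.of_subsingleton (v := fun _ : Unit => v) () hv).tmul_of_isDomain
    (LinearIndependent.of_subsingleton (v := fun _ : Unit => w) () hw)).ne_zero ((), ())

lemma exists_ne_zero_map_eq_zero_of_finrank_lt [FiniteDimensional K V] [FiniteDimensional K W]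
    (f : V →ₗ[K] W) (h : finrank K W < finrank K V) : ∃ v, v ≠ 0 ∧ f v = 0 := by
  obtain ⟨v, hv, hv₀⟩ := (Submodule.ne_bot_iff _).1 (LinearMap.ker_ne_bot_of_finrank_lt h)
  exact ⟨v, hv₀, hv⟩

lemma finrank_range_lt_of_not_injective [FiniteDimensional K V] {f : V →ₗ[K] W}
    (hf : ¬ Function.Injective f) : finrank K (LinearMap.range f) < finrank K V := by
  have hker : 0 < finrank K (LinearMap.ker f) :=
    Nat.pos_of_ne_zero fun h => hf (LinearMap.ker_eq_bot.1 (Submodule.finrank_eq_zero.1 h))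
  have := f.finrank_range_add_finrank_ker
  lia

lemma finrank_range_eq_card_image [Fintype ι] [DecidableEq κ] (v : Basis ι K V) {w : κ → W}
    (hw : LinearIndependent K w) {f : V →ₗ[K] W} {σ : ι → κ} (hf : ∀ i, f (v i) = w (σ i)) :
    finrank K (LinearMap.range f) = (Finset.univ.image σ).card := by
  have range_eq : LinearMap.range f =
      Submodule.span K (Set.range (w ∘ ((↑) : Finset.univ.image σ → κ))) := by
    rw [LinearMap.range_eq_map, ← v.span_eq, Submodule.map_span, ← Set.range_comp]
    congr 1
    ext z
    simp [hf]
  rw [range_eq, finrank_span_eq_card (hw.comp _ Subtype.val_injective), Fintype.card_coe]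

lemma exists_basis_eq_sum_tmul_or_eq_tmul (hV : finrank K V = 2) (x : Basis (Fin 2) K X)
    (t : V ⊗[K] X) :
    (∃ a : Basis (Fin 2) K V, t = ∑ i, a i ⊗ₜ x i) ∨ ∃ α e, t = α ⊗ₜ e := by
  obtain ⟨a, rfl⟩ := TensorProduct.eq_repr_basis_right x t
  rw [Finsupp.sum_fintype _ _ (by simp)]
  by_cases ha : LinearIndependent K a
  · exact .inl ⟨basisOfLinearIndependentOfCardEqFinrank ha (by simp [hV]), by simp⟩
  right
  rw [Fin.sum_univ_two]
  by_cases ha₀ : a 0 = 0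
  · exact ⟨a 1, x 1, by simp [ha₀]⟩
  obtain ⟨r, hr⟩ : ∃ r : K, r • a 0 = a 1 := by
    have ha_eq : ⇑a = ![a 0, a 1] := by ext i; fin_cases i <;> rfl
    rw [ha_eq, LinearIndependent.pair_iff' ha₀] at ha
    simpa using ha
  exact ⟨a 0, x 0 + r • x 1, by rw [← hr, TensorProduct.smul_tmul, ← TensorProduct.tmul_add]⟩

variable (T₁ : B →ₗ[K] X ⊗[K] Y) (T₂ : A ⊗[K] X →ₗ[K] P) (T₃ : Y ⊗[K] C →ₗ[K] Q)

lemma not_injective_contractedMap_of_finrank_range_mul_lt [FiniteDimensional K B]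
    [FiniteDimensional K C] [FiniteDimensional K X] [FiniteDimensional K Q] {α : A} (hα : α ≠ 0)
    (h : finrank K (LinearMap.range (T₂ ∘ₗ TensorProduct.mk K A X α)) * finrank K Q <
      finrank K B * finrank K C) :
    ¬ Function.Injective (contractedMap T₁ T₂ T₃) := by
  let S := T₂ ∘ₗ TensorProduct.mk K A X α
  obtain ⟨z, hz, hSz⟩ := exists_ne_zero_map_eq_zero_of_finrank_lt
    (TensorProduct.map S.rangeRestrict T₃ ∘ₗ
      (TensorProduct.assoc K X Y C).toLinearMap ∘ₗ T₁.rTensor C)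
    (by simpa only [finrank_tensorProduct] using h)
  have hαz : contractedMap T₁ T₂ T₃ (α ⊗ₜ z) = 0 := by
    have factor : TensorProduct.map S T₃ =
        (LinearMap.range S).subtype.rTensor Q ∘ₗ TensorProduct.map S.rangeRestrict T₃ := by
      rw [LinearMap.rTensor_comp_map, LinearMap.subtype_comp_codRestrict]
    calc contractedMap T₁ T₂ T₃ (α ⊗ₜ z)
        = TensorProduct.map S T₃ (TensorProduct.assoc K X Y C (T₁.rTensor C z)) :=
          LinearMap.congr_fun (contractedMap_comp_mk T₁ T₂ T₃ α) z
      _ = (LinearMap.range S).subtype.rTensor Q 0 := by rw [factor, ← hSz]; rfl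
      _ = 0 := map_zero _
  exact fun hinj => tmul_ne_zero_of_ne_zero hα hz ((injective_iff_map_eq_zero _).1 hinj _ hαz)

lemma not_injective_contractedMap_of_map_tmul_eq_zero [FiniteDimensional K B]
    [FiniteDimensional K C] [FiniteDimensional K X] [FiniteDimensional K Q]
    (h : (finrank K X - 1) * finrank K Q < finrank K B * finrank K C)
    {α : A} {e : X} (hαe : α ⊗ₜ[K] e ≠ 0) (hT₂ : T₂ (α ⊗ₜ e) = 0) :
    ¬ Function.Injective (contractedMap T₁ T₂ T₃) := by
  have hα : α ≠ 0 := by rintro rfl; simp at hαe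
  have he : e ≠ 0 := by rintro rfl; simp at hαe
  have hrange : finrank K (LinearMap.range (T₂ ∘ₗ TensorProduct.mk K A X α)) < finrank K X :=
    finrank_range_lt_of_not_injective fun hinj =>
      he ((injective_iff_map_eq_zero _).1 hinj e hT₂)
  exact not_injective_contractedMap_of_finrank_range_mul_lt T₁ T₂ T₃ hα
    ((Nat.mul_le_mul_right _ (Nat.le_sub_one_of_lt hrange)).trans_lt h)

lemma not_injective_contractedMap [FiniteDimensional K P] [FiniteDimensional K Q]
    (hA : finrank K A = 2) (hB : finrank K B = 2) (hC : finrank K C = 2)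
    (hX : finrank K X = 2) (hY : finrank K Y = 2) (hP : finrank K P ≤ 3) (hQ : finrank K Q ≤ 3) :
    ¬ Function.Injective (contractedMap T₁ T₂ T₃) := by
  have := finite_of_finrank_eq_succ hA
  have := finite_of_finrank_eq_succ hB
  have := finite_of_finrank_eq_succ hC
  have := finite_of_finrank_eq_succ hX
  have := finite_of_finrank_eq_succ hY
  let x := finBasisOfFinrankEq K X hX
  let y := finBasisOfFinrankEq K Y hY
  obtain ⟨u, hu, hT₂u⟩ := exists_ne_zero_map_eq_zero_of_finrank_lt T₂
    (by rw [finrank_tensorProduct, hA, hX]; lia)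
  obtain ⟨v, hv, hT₃v⟩ := exists_ne_zero_map_eq_zero_of_finrank_lt
    (T₃ ∘ₗ (TensorProduct.comm K C Y).toLinearMap)
    (by rw [finrank_tensorProduct, hC, hY]; lia)
  rcases exists_basis_eq_sum_tmul_or_eq_tmul hA x u with ⟨a, rfl⟩ | ⟨α, e, rfl⟩
  · rcases exists_basis_eq_sum_tmul_or_eq_tmul hC y v with ⟨c, rfl⟩ | ⟨γ, e, rfl⟩
    · exact not_injective_contractedMap_of_map_sum_tmul_eq_zero T₁ T₂ T₃ a
        (finBasisOfFinrankEq K B hB) c x y hT₂u (by simpa using hT₃v)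
    · rw [← injective_contractedMap_reverse_iff]
      exact not_injective_contractedMap_of_map_tmul_eq_zero _ _ _ (by rw [hB, hA, hY]; lia) hv hT₃v
  · exact not_injective_contractedMap_of_map_tmul_eq_zero T₁ T₂ T₃ (by rw [hB, hC, hX]; lia) hu hT₂u

/-- Multiplication of linear forms in two variables, in the monomial bases `a`, `x` of linear forms
and `p` of quadratic forms. -/
def linearFormMul (a : Basis (Fin 2) K A) (x : Basis (Fin 2) K X) (p : Fin 3 → P) :
    A ⊗[K] X →ₗ[K] P :=
  (a.tensorProduct x).constr K fun ik => p ⟨ik.1 + ik.2, by lia⟩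

lemma linearFormMul_tmul (a : Basis (Fin 2) K A) (x : Basis (Fin 2) K X) (p : Fin 3 → P)
    (i k : Fin 2) : linearFormMul a x p (a i ⊗ₜ x k) = p ⟨i + k, by lia⟩ := by
  rw [← Basis.tensorProduct_apply, linearFormMul, Basis.constr_basis]

lemma finrank_range_contractedMap_linearFormMul
    (a : Basis (Fin 2) K A) (b : Basis (Fin 2) K B) (c : Basis (Fin 2) K C)
    (x : Basis (Fin 2) K X) (y : Basis (Fin 2) K Y)
    (p : Basis (Fin 3) K P) (q : Basis (Fin 3) K Q) :
    finrank K (LinearMap.range (contractedMap (b.constr K fun k => x k ⊗ₜ[K] y k)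
      (linearFormMul a x p) (linearFormMul y c q))) = 7 := by
  let σ (i : Fin 2 × Fin 2 × Fin 2) : Fin 3 × Fin 3 :=
    (⟨i.1 + i.2.1, by lia⟩, ⟨i.2.1 + i.2.2, by lia⟩)
  have card_image : (Finset.univ.image σ).card = 7 := by decide
  rw [← card_image]
  refine finrank_range_eq_card_image (a.tensorProduct (b.tensorProduct c))
    (p.tensorProduct q).linearIndependent fun ⟨i, k, j⟩ => ?_
  simp [σ, contractedMap_tmul, linearFormMul_tmul]

theorem stmt_9_general (hA : finrank K A = 2) (hB : finrank K B = 2) (hC : finrank K C = 2)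
    (hX : finrank K X = 2) (hY : finrank K Y = 2) (hP : finrank K P = 3) (hQ : finrank K Q = 3) :
    (∀ (T₁ : B →ₗ[K] X ⊗[K] Y) (T₂ : A ⊗[K] X →ₗ[K] P) (T₃ : Y ⊗[K] C →ₗ[K] Q),
      finrank K (LinearMap.range (contractedMap T₁ T₂ T₃)) ≤ 7) ∧
    ∃ (T₁ : B →ₗ[K] X ⊗[K] Y) (T₂ : A ⊗[K] X →ₗ[K] P) (T₃ : Y ⊗[K] C →ₗ[K] Q),
      finrank K (LinearMap.range (contractedMap T₁ T₂ T₃)) = 7 := by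
  have := finite_of_finrank_eq_succ hA
  have := finite_of_finrank_eq_succ hB
  have := finite_of_finrank_eq_succ hC
  have := finite_of_finrank_eq_succ hX
  have := finite_of_finrank_eq_succ hY
  have := finite_of_finrank_eq_succ hP
  have := finite_of_finrank_eq_succ hQ
  refine ⟨fun T₁ T₂ T₃ => ?_, _, _, _, finrank_range_contractedMap_linearFormMul
    (finBasisOfFinrankEq K A hA) (finBasisOfFinrankEq K B hB) (finBasisOfFinrankEq K C hC)
    (finBasisOfFinrankEq K X hX) (finBasisOfFinrankEq K Y hY)
    (finBasisOfFinrankEq K P hP) (finBasisOfFinrankEq K Q hQ)⟩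
  have hlt := finrank_range_lt_of_not_injective
    (not_injective_contractedMap T₁ T₂ T₃ hA hB hC hX hY hP.le hQ.le)
  rw [finrank_tensorProduct, finrank_tensorProduct, hA, hB, hC] at hlt
  lia

end Rank

/-- For the network with three capacity-2 input edges, two capacity-2 internal edges and two
capacity-3 output edges, QMC = 8 but QMF ≤ 7 and 7 is achieved: every choice of tensors gives
rank at most 7, and some choice achieves rank 7 (so QMF = 7 < 8 = QMC). -/
theorem stmt_9 :
    (∀ (T₁ : (Fin 2 → ℂ) →ₗ[ℂ] (Fin 2 → ℂ) ⊗[ℂ] (Fin 2 → ℂ))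
        (T₂ T₃ : (Fin 2 → ℂ) ⊗[ℂ] (Fin 2 → ℂ) →ₗ[ℂ] (Fin 3 → ℂ)),
      Module.finrank ℂ ↥(LinearMap.range (network T₁ T₂ T₃)) ≤ 7) ∧
    (∃ (T₁ : (Fin 2 → ℂ) →ₗ[ℂ] (Fin 2 → ℂ) ⊗[ℂ] (Fin 2 → ℂ))
        (T₂ T₃ : (Fin 2 → ℂ) ⊗[ℂ] (Fin 2 → ℂ) →ₗ[ℂ] (Fin 3 → ℂ)),
      Module.finrank ℂ ↥(LinearMap.range (network T₁ T₂ T₃)) = 7) :=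
  stmt_9_general (finrank_fin_fun ℂ) (finrank_fin_fun ℂ) (finrank_fin_fun ℂ) (finrank_fin_fun ℂ)
    (finrank_fin_fun ℂ) (finrank_fin_fun ℂ) (finrank_fin_fun ℂ)

end
end
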